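/- arXiv:2006.09857 — 7 statements merged into one kernel-verified Lean document; each statement's English description precedes it below -/
import Mathlib

section
/- Assume γ>0 and the remainder conditions [𝓛_ν] and [ℓ_δ]. Define w(s)=exp(−∫_s^1 (1−x)^{γ−1}·L(1/(1−x)) dx) for s∈[0,1) (the integral converges since γ>0) and Λ(y)=y^{ν}·𝓛(1/y) for y∈(0,1]. Then as s↑1, w(s) = exp( −(1/γ)·(1−s)^{γ}·L(1/(1−s))·(1+O(Λ(1−s))) ); here (1−s)^{γ}·L(1/(1−s)) = −g(s)/Λ(1−s). -/
open Real Filter Asymptotics Set MeasureTheory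

/-!
The remainder condition forces a slowly varying `f` to converge. Put `H u = log (f (exp u))` and
`η u = exp (H u - ν u)`, so that `H (u + a) - H u = O(η u)` for each `a ≥ 0`. By the Baire category
theorem the constant can be chosen uniformly for `a` in an interval `[0, d]`, and since
`η (u + d) ≤ q η u` with `q < 1`, summing over steps of length `d` makes it uniform in all `a ≥ 0`.
Hence `H` is bounded, `η u = O(exp (-ν u))`, and `H` is Cauchy: `log f(x) = l + O(x ^ (-ν))`.

Applied to `𝓛` and `ℓ` this gives `L(1/y) = c + O(y ^ ν)` with `c > 0`, and both
`∫₀ʰ y ^ (γ - 1) L(1/y) dy` and `h ^ γ / γ * L(1/h)` are `c h ^ γ / γ + O(h ^ (γ + ν))`.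
-/

open scoped Topology NNReal

lemma exists_isOpen_eventually_forall_norm_le {X α E F : Type*} [TopologicalSpace X] [BaireSpace X]
    [Nonempty X] [SeminormedAddCommGroup E] [SeminormedAddCommGroup F] {l : Filter α}
    [l.IsCountablyGenerated] {G : X → α → E} {η : α → F}
    (hG : ∀ᶠ u in l, Continuous fun a ↦ G a u) (hO : ∀ a, G a =O[l] η) :
    ∃ U : Set X, IsOpen U ∧ U.Nonempty ∧ ∃ C ≥ 0, ∀ᶠ u in l, ∀ a ∈ U, ‖G a u‖ ≤ C * ‖η u‖ := by
  obtain ⟨s, hs⟩ := l.exists_antitone_basis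
  let S : ℕ → Set α := fun n ↦ s n ∩ {u | Continuous fun a ↦ G a u}
  let A : ℕ → Set X := fun n ↦ ⋂ u ∈ S n, {a | ‖G a u‖ ≤ n * ‖η u‖}
  have hA_closed (n : ℕ) : IsClosed (A n) :=
    isClosed_biInter fun u hu ↦ isClosed_le hu.2.norm continuous_const
  have hA_cover : ⋃ n, A n = univ := by
    refine eq_univ_of_forall fun a ↦ mem_iUnion.2 ?_
    obtain ⟨c, hc⟩ := (hO a).bound
    obtain ⟨N, -, hN⟩ := hs.toHasBasis.eventually_iff.1 hc
    obtain ⟨n, hn⟩ := exists_nat_ge (max c N)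
    have hNn : N ≤ n := by exact_mod_cast (le_max_right _ _).trans hn
    refine ⟨n, mem_iInter₂.2 fun u hu ↦ (hN (hs.antitone hNn hu.1)).trans ?_⟩
    gcongr
    exact (le_max_left _ _).trans hn
  obtain ⟨n, hn⟩ := nonempty_interior_of_iUnion_of_closed hA_closed hA_cover
  refine ⟨interior (A n), isOpen_interior, hn, n, n.cast_nonneg, ?_⟩
  filter_upwards [hs.mem n, hG] with u hu hGu a ha
  exact mem_iInter₂.1 (interior_subset ha) u ⟨hu, hGu⟩

section Shift

variable {E F : Type*} [SeminormedAddCommGroup E] [SeminormedAddCommGroup F]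

lemma exists_eventually_forall_mem_Icc_norm_shift_sub_le {H : ℝ → E} {η : ℝ → F}
    (hH : ∀ᶠ u in atTop, ContinuousAt H u)
    (hη : ∀ a ≥ 0, (fun u ↦ η (u - a)) =O[atTop] η)
    (hO : ∀ a ≥ 0, (fun u ↦ H (u + a) - H u) =O[atTop] η) :
    ∃ d > 0, ∃ C ≥ 0, ∀ᶠ v in atTop, ∀ c ∈ Icc 0 d, ‖H (v + c) - H v‖ ≤ C * ‖η v‖ := by
  have hcont : ∀ᶠ u in atTop, Continuous fun a : ℝ≥0 ↦ H (u + a) - H u := by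
    filter_upwards [eventually_forall_ge_atTop.2 hH] with u hu
    refine continuous_iff_continuousAt.2 fun a ↦ .sub ?_ continuousAt_const
    exact ContinuousAt.comp (f := fun a : ℝ≥0 ↦ u + (a : ℝ))
      (hu _ (le_add_of_nonneg_right a.2)) (by fun_prop)
  obtain ⟨U, hU, ⟨x, hxU⟩, C, hC0, hC⟩ :=
    exists_isOpen_eventually_forall_norm_le hcont fun a ↦ hO a a.2
  obtain ⟨ε, hε, hball⟩ := Metric.isOpen_iff.1 hU x hxU
  obtain ⟨K, hK0, hK⟩ := (hη x x.2).exists_nonneg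
  refine ⟨ε / 2, half_pos hε, 2 * C * K, by positivity, ?_⟩
  have hshift : Tendsto (fun v : ℝ ↦ v - x) atTop atTop :=
    tendsto_atTop_add_const_right _ _ tendsto_id
  filter_upwards [hshift.eventually hC, hK.bound] with v hv hηv c hc
  -- `v` and `v + c` are both reached from `v - x` by shifts that lie in `U`.
  have hbase (b : ℝ) (hb : b ∈ Icc 0 (ε / 2)) :
      ‖H (v + b) - H (v - x)‖ ≤ C * ‖η (v - x)‖ := by
    lift b to ℝ≥0 using hb.1
    have hxb : x + b ∈ U := hball <| by
      rw [Metric.mem_ball, NNReal.dist_eq, NNReal.coe_add, add_sub_cancel_left, NNReal.abs_eq]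
      linarith [hb.2]
    simpa only [NNReal.coe_add, ← add_assoc, sub_add_cancel] using hv (x + b) hxb
  have h_start : ‖H v - H (v - x)‖ ≤ C * ‖η (v - x)‖ := by
    simpa using hbase 0 ⟨le_rfl, (half_pos hε).le⟩
  calc ‖H (v + c) - H v‖ ≤ ‖H (v + c) - H (v - x)‖ + ‖H v - H (v - x)‖ := by
        rw [← sub_sub_sub_cancel_right _ _ (H (v - x))]
        exact norm_sub_le _ _
    _ ≤ 2 * C * ‖η (v - x)‖ := by linarith [hbase c hc]
    _ ≤ 2 * C * (K * ‖η v‖) := by gcongr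
    _ = 2 * C * K * ‖η v‖ := by ring

lemma norm_shift_sub_le_of_geometric {H : ℝ → E} {η : ℝ → ℝ} {V d q C : ℝ} (hd : 0 < d)
    (hq0 : 0 ≤ q) (hq1 : q < 1) (hC : 0 ≤ C) (hη : ∀ v ≥ V, η (v + d) ≤ q * η v)
    (hstep : ∀ v ≥ V, ∀ c ∈ Icc 0 d, ‖H (v + c) - H v‖ ≤ C * η v) :
    ∀ v ≥ V, ∀ t ≥ 0, ‖H (v + t) - H v‖ ≤ C / (1 - q) * η v := by
  have h1q : 0 < 1 - q := sub_pos.2 hq1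
  have hC_le (v : ℝ) (hv : v ≥ V) : C * η v ≤ C / (1 - q) * η v := by
    have hCη : 0 ≤ C * η v := (norm_nonneg _).trans (hstep v hv 0 ⟨le_rfl, hd.le⟩)
    rw [div_mul_eq_mul_div]
    exact le_div_self hCη h1q (by linarith)
  have hsteps (k : ℕ) : ∀ v ≥ V, ∀ t ∈ Icc 0 (k * d), ‖H (v + t) - H v‖ ≤ C / (1 - q) * η v := by
    induction k with
    | zero =>
      intro v hv t ht
      exact (hstep v hv t ⟨ht.1, ht.2.trans (by simpa using hd.le)⟩).trans (hC_le v hv)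
    | succ k ih =>
      intro v hv t ⟨ht0, ht⟩
      push_cast at ht
      rcases le_total t d with htd | hdt
      · exact (hstep v hv t ⟨ht0, htd⟩).trans (hC_le v hv)
      have h_tail : ‖H (v + t) - H (v + d)‖ ≤ C / (1 - q) * η (v + d) := by
        simpa using ih (v + d) (by linarith) (t - d) ⟨by linarith, by linarith⟩
      calc ‖H (v + t) - H v‖ ≤ ‖H (v + t) - H (v + d)‖ + ‖H (v + d) - H v‖ :=
            norm_sub_le_norm_sub_add_norm_sub _ _ _
        _ ≤ C / (1 - q) * η (v + d) + C * η v := by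
            gcongr
            exact hstep v hv d ⟨hd.le, le_rfl⟩
        _ ≤ C / (1 - q) * (q * η v) + C * η v := by
            gcongr
            exact hη v hv
        _ = C / (1 - q) * η v := by field_simp; ring
  intro v hv t ht
  obtain ⟨k, hk⟩ := exists_nat_ge (t / d)
  exact hsteps k v hv t ⟨ht, (div_le_iff₀ hd).1 hk⟩

lemma exists_eventually_norm_sub_le_of_shift [CompleteSpace E] {H : ℝ → E} {g : ℝ → ℝ}
    (hg : Tendsto g atTop (𝓝 0)) (hH : ∀ᶠ v in atTop, ∀ t ≥ 0, ‖H (v + t) - H v‖ ≤ g v) :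
    ∃ l, ∀ᶠ v in atTop, ‖H v - l‖ ≤ g v := by
  have hcauchy : CauchySeq H := by
    refine Metric.cauchySeq_iff'.2 fun ε hε ↦ ?_
    obtain ⟨N, hN, hgN⟩ := (hH.and (hg.eventually_lt_const hε)).exists
    refine ⟨N, fun n hn ↦ ?_⟩
    rw [dist_eq_norm, ← add_sub_cancel N n]
    exact (hN _ (sub_nonneg.2 hn)).trans_lt hgN
  obtain ⟨l, hl⟩ := cauchySeq_tendsto_of_complete hcauchy
  refine ⟨l, ?_⟩
  filter_upwards [hH] with v hv
  rw [norm_sub_rev]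
  refine le_of_tendsto
    ((hl.comp (tendsto_atTop_add_const_left atTop v tendsto_id)).sub_const (H v)).norm ?_
  filter_upwards [eventually_ge_atTop 0] with t ht using hv t ht

end Shift

section ExponentialRemainder

variable {H : ℝ → ℝ} {ν : ℝ}

lemma exists_eventually_forall_abs_shift_sub_le_exp (hν : 0 < ν)
    (hH : ∀ᶠ u in atTop, ContinuousAt H u)
    (hlim : ∀ a ≥ 0, Tendsto (fun u ↦ H (u + a) - H u) atTop (𝓝 0))
    (hO : ∀ a ≥ 0, (fun u ↦ H (u + a) - H u) =O[atTop] fun u ↦ exp (H u - ν * u)) :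
    ∃ C ≥ 0, ∀ᶠ v in atTop, ∀ t ≥ 0, |H (v + t) - H v| ≤ C * exp (H v - ν * v) := by
  have hη (a : ℝ) (ha : a ≥ 0) : (fun u ↦ exp (H (u - a) - ν * (u - a))) =O[atTop]
      fun u ↦ exp (H u - ν * u) := by
    have hshift : Tendsto (fun u : ℝ ↦ u - a) atTop atTop :=
      tendsto_atTop_add_const_right _ _ tendsto_id
    refine isBigO_exp_comp_exp_comp.2
      ((((hlim a ha).comp hshift).const_sub (ν * a)).congr fun u ↦ ?_).isBoundedUnder_le
    simp only [Function.comp_apply, sub_add_cancel, Pi.sub_apply]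
    ring
  obtain ⟨d, hd, C, hC, hstep⟩ := exists_eventually_forall_mem_Icc_norm_shift_sub_le hH hη hO
  have hgeom : ∀ᶠ v in atTop,
      exp (H (v + d) - ν * (v + d)) ≤ exp (-(ν * d / 2)) * exp (H v - ν * v) := by
    have hνd : 0 < ν * d / 2 := by positivity
    filter_upwards [(hlim d hd.le).eventually_lt_const hνd] with v hv
    rw [← exp_add, exp_le_exp]
    linarith
  have hq1 : exp (-(ν * d / 2)) < 1 := exp_lt_one_iff.2 (by linarith [mul_pos hν hd])
  obtain ⟨V, hV⟩ := eventually_atTop.1 (hgeom.and hstep)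
  refine ⟨C / (1 - exp (-(ν * d / 2))), div_nonneg hC (sub_nonneg.2 hq1.le), ?_⟩
  filter_upwards [eventually_ge_atTop V] with v hv
  refine norm_shift_sub_le_of_geometric (H := H) (η := fun v ↦ exp (H v - ν * v)) hd
    (exp_pos _).le hq1 hC (fun v hv ↦ (hV v hv).1) (fun v hv c hc ↦ ?_) v hv
  simpa only [norm_eq_abs, abs_exp] using (hV v hv).2 c hc

lemma exists_sub_isBigO_exp_neg (hν : 0 < ν) (hH : ∀ᶠ u in atTop, ContinuousAt H u)
    (hlim : ∀ a ≥ 0, Tendsto (fun u ↦ H (u + a) - H u) atTop (𝓝 0))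
    (hO : ∀ a ≥ 0, (fun u ↦ H (u + a) - H u) =O[atTop] fun u ↦ exp (H u - ν * u)) :
    ∃ l, (fun u ↦ H u - l) =O[atTop] fun u ↦ exp (-ν * u) := by
  obtain ⟨C, hC0, hC⟩ := exists_eventually_forall_abs_shift_sub_le_exp hν hH hlim hO
  obtain ⟨B, hB⟩ : ∃ B, ∀ᶠ v in atTop, H v ≤ B := by
    obtain ⟨V, hV⟩ := hC.exists
    refine ⟨H V + C * exp (H V - ν * V), ?_⟩
    filter_upwards [eventually_ge_atTop V] with v hv
    have := (abs_le.1 (hV (v - V) (sub_nonneg.2 hv))).2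
    rw [add_sub_cancel] at this
    linarith
  have hshift : ∀ᶠ v in atTop, ∀ t ≥ 0, ‖H (v + t) - H v‖ ≤ C * exp B * exp (-ν * v) := by
    filter_upwards [hC, hB] with v hv hBv t ht
    refine (hv t ht).trans ?_
    rw [mul_assoc, ← exp_add, neg_mul, ← sub_eq_add_neg]
    gcongr
  have hg : Tendsto (fun v ↦ C * exp B * exp (-ν * v)) atTop (𝓝 0) := by
    simpa using (tendsto_exp_atBot.comp
      (tendsto_id.const_mul_atTop_of_neg (neg_lt_zero.2 hν))).const_mul (C * exp B)
  obtain ⟨l, hl⟩ := exists_eventually_norm_sub_le_of_shift hg hshift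
  exact ⟨l, .of_bound (C * exp B) (by simpa only [norm_eq_abs, abs_exp] using hl)⟩

end ExponentialRemainder

/-- Slow variation at infinity with remainder, the conditions `[𝓛_ν]` and `[ℓ_δ]`, for a function
that is positive and continuous near infinity. The convergence `tendsto_div` is a separate field
because `f x / x ^ ν` is not assumed to tend to `0`. -/
structure SlowlyVaryingWithRemainder (f : ℝ → ℝ) (ν : ℝ) : Prop where
  eventually_pos : ∀ᶠ x in atTop, 0 < f x
  eventually_continuousAt : ∀ᶠ x in atTop, ContinuousAt f x
  tendsto_div : ∀ c > 0, Tendsto (fun x ↦ f (c * x) / f x) atTop (𝓝 1)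
  isBigO_div_sub_one : ∀ c > 0, (fun x ↦ f (c * x) / f x - 1) =O[atTop] fun x ↦ f x / x ^ ν

namespace SlowlyVaryingWithRemainder

variable {f : ℝ → ℝ} {ν : ℝ}

lemma of_Ici {X : ℝ} (hpos : ∀ x ∈ Ici X, 0 < f x) (hcont : ContinuousOn f (Ici X))
    (hlim : ∀ c > 0, Tendsto (fun x ↦ f (c * x) / f x) atTop (𝓝 1))
    (hO : ∀ c > 0, (fun x ↦ f (c * x) / f x - 1) =O[atTop] fun x ↦ f x / x ^ ν) :
    SlowlyVaryingWithRemainder f ν where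
  eventually_pos := (eventually_ge_atTop X).mono hpos
  eventually_continuousAt :=
    (eventually_gt_atTop X).mono fun _ hx ↦ hcont.continuousAt (Ici_mem_nhds hx)
  tendsto_div := hlim
  isBigO_div_sub_one := hO

lemma exists_log_sub_isBigO (hf : SlowlyVaryingWithRemainder f ν) (hν : 0 < ν) :
    ∃ l, (fun x ↦ log (f x) - l) =O[atTop] fun x ↦ x ^ (-ν) := by
  have hpos_exp : ∀ᶠ u in atTop, 0 < f (exp u) := tendsto_exp_atTop.eventually hf.eventually_pos
  have hcont_exp : ∀ᶠ u in atTop, ContinuousAt (fun u ↦ log (f (exp u))) u := by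
    filter_upwards [tendsto_exp_atTop.eventually hf.eventually_continuousAt, hpos_exp] with u hu hu0
    exact (hu.comp continuous_exp.continuousAt).log hu0.ne'
  have hratio (a : ℝ) : Tendsto (fun u ↦ f (exp a * exp u) / f (exp u)) atTop (𝓝 1) :=
    (hf.tendsto_div _ (exp_pos a)).comp tendsto_exp_atTop
  have hlog_ratio (a : ℝ) : (fun u ↦ log (f (exp a * exp u) / f (exp u))) =ᶠ[atTop]
      fun u ↦ log (f (exp (u + a))) - log (f (exp u)) := by
    filter_upwards [hpos_exp,
      (tendsto_atTop_add_const_right _ a tendsto_id).eventually hpos_exp] with u hu hua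
    rw [id, exp_add, mul_comm] at hua
    rw [log_div hua.ne' hu.ne', exp_add, mul_comm]
  have hlim (a : ℝ) (_ : a ≥ 0) :
      Tendsto (fun u ↦ log (f (exp (u + a))) - log (f (exp u))) atTop (𝓝 0) := by
    simpa using ((hratio a).log one_ne_zero).congr' (hlog_ratio a)
  have hO (a : ℝ) (_ : a ≥ 0) : (fun u ↦ log (f (exp (u + a))) - log (f (exp u))) =O[atTop]
      fun u ↦ exp (log (f (exp u)) - ν * u) := by
    have hlog : (fun y ↦ log y) =O[𝓝 1] fun y ↦ y - 1 := by
      simpa using (hasDerivAt_log one_ne_zero).isBigO_sub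
    refine ((hlog.comp_tendsto (hratio a)).trans
      ((hf.isBigO_div_sub_one _ (exp_pos a)).comp_tendsto tendsto_exp_atTop)).congr'
      (hlog_ratio a) ?_
    filter_upwards [hpos_exp] with u hu
    rw [Function.comp_apply, exp_sub, exp_log hu, ← exp_mul, mul_comm u]
  obtain ⟨l, hl⟩ := exists_sub_isBigO_exp_neg hν hcont_exp hlim hO
  refine ⟨l, (hl.comp_tendsto tendsto_log_atTop).congr' ?_ ?_⟩
  · filter_upwards [eventually_gt_atTop 0] with x hx
    rw [Function.comp_apply, exp_log hx]
  · filter_upwards [eventually_gt_atTop 0] with x hx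
    rw [Function.comp_apply, rpow_def_of_pos hx, mul_comm]

lemma exists_tendsto (hf : SlowlyVaryingWithRemainder f ν) (hν : 0 < ν) :
    ∃ c > 0, Tendsto f atTop (𝓝 c) := by
  obtain ⟨l, hl⟩ := hf.exists_log_sub_isBigO hν
  have hlog : Tendsto (fun x ↦ log (f x)) atTop (𝓝 l) :=
    tendsto_sub_nhds_zero_iff.1 (hl.trans_tendsto (tendsto_rpow_neg_atTop hν))
  refine ⟨exp l, exp_pos l, ((continuous_exp.tendsto l).comp hlog).congr' ?_⟩
  filter_upwards [hf.eventually_pos] with x hx using exp_log hx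

lemma exists_div_sub_isBigO {g : ℝ → ℝ} {δ : ℝ} (hf : SlowlyVaryingWithRemainder f ν)
    (hg : SlowlyVaryingWithRemainder g δ) (hν : 0 < ν) (hνδ : ν ≤ δ) :
    ∃ c > 0, (fun x ↦ g x / f x - c) =O[atTop] fun x ↦ x ^ (-ν) := by
  obtain ⟨a, ha⟩ := hf.exists_log_sub_isBigO hν
  obtain ⟨b, hb⟩ := hg.exists_log_sub_isBigO (hν.trans_le hνδ)
  have hδν : (fun x : ℝ ↦ x ^ (-δ)) =O[atTop] fun x ↦ x ^ (-ν) := by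
    refine .of_bound' ?_
    filter_upwards [eventually_ge_atTop 1] with x hx
    rw [norm_of_nonneg (by positivity), norm_of_nonneg (by positivity)]
    exact rpow_le_rpow_of_exponent_le hx (neg_le_neg hνδ)
  have hlog : (fun x ↦ log (g x) - log (f x) - (b - a)) =O[atTop] fun x ↦ x ^ (-ν) :=
    ((hb.trans hδν).sub ha).congr_left fun x ↦ sub_sub_sub_comm _ _ _ _
  have hlim : Tendsto (fun x ↦ log (g x) - log (f x)) atTop (𝓝 (b - a)) :=
    tendsto_sub_nhds_zero_iff.1 (hlog.trans_tendsto (tendsto_rpow_neg_atTop hν))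
  refine ⟨exp (b - a), exp_pos _,
    (((hasDerivAt_exp _).isBigO_sub.comp_tendsto hlim).trans hlog).congr' ?_ .rfl⟩
  filter_upwards [hf.eventually_pos, hg.eventually_pos] with x hfx hgx
  rw [Function.comp_apply, exp_sub, exp_log hfx, exp_log hgx]

end SlowlyVaryingWithRemainder

section Integral

variable {E : Type*} [NormedAddCommGroup E]

lemma eventually_intervalIntegrable_of_integrableAtFilter {φ : ℝ → E} {a : ℝ}
    (hφ : IntegrableAtFilter φ (𝓝[>] a)) : ∀ᶠ b in 𝓝[>] a, IntervalIntegrable φ volume a b := by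
  obtain ⟨s, hs, hφs⟩ := hφ
  obtain ⟨c, hc, hcs⟩ := mem_nhdsGT_iff_exists_Ioc_subset.1 hs
  filter_upwards [Ioc_mem_nhdsGT hc] with b hb
  rw [intervalIntegrable_iff_integrableOn_Ioc_of_le hb.1.le]
  exact hφs.mono_set ((Ioc_subset_Ioc_right hb.2).trans hcs)

lemma integrableAtFilter_rpow_sub_one {a : ℝ} (ha : 0 < a) :
    IntegrableAtFilter (fun y : ℝ ↦ y ^ (a - 1)) (𝓝[>] 0) :=
  ⟨Ioc 0 1, Ioc_mem_nhdsGT one_pos, (intervalIntegrable_iff_integrableOn_Ioc_of_le zero_le_one).1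
    (intervalIntegral.intervalIntegrable_rpow' (by linarith))⟩

lemma integral_rpow_sub_one {a : ℝ} (ha : 0 < a) (h : ℝ) :
    ∫ y in (0 : ℝ)..h, y ^ (a - 1) = h ^ a / a := by
  rw [integral_rpow (.inl (by linarith)), sub_add_cancel, zero_rpow ha.ne', sub_zero]

lemma stronglyMeasurableAtFilter_nhdsGT_of_continuousAt {φ : ℝ → E} {a : ℝ}
    (hφ : ∀ᶠ y in 𝓝[>] a, ContinuousAt φ y) : StronglyMeasurableAtFilter φ (𝓝[>] a) := by
  obtain ⟨b, hb, hab⟩ := mem_nhdsGT_iff_exists_Ioc_subset.1 hφ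
  rw [← nhdsWithin_Ioc_eq_nhdsGT hb]
  exact ContinuousOn.stronglyMeasurableAtFilter_nhdsWithin
    (fun y hy ↦ (hab hy).continuousWithinAt) measurableSet_Ioc a

variable [NormedSpace ℝ E]

lemma integral_isBigO_rpow {φ : ℝ → E} {a : ℝ} (ha : 0 < a)
    (hφ : φ =O[𝓝[>] 0] fun y ↦ y ^ (a - 1)) :
    (fun h ↦ ∫ y in (0 : ℝ)..h, φ y) =O[𝓝[>] 0] fun h ↦ h ^ a := by
  obtain ⟨C, hC⟩ := hφ.bound
  obtain ⟨b, hb, hbound⟩ := mem_nhdsGT_iff_exists_Ioc_subset.1 hC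
  refine .of_bound (C / a) ?_
  filter_upwards [Ioc_mem_nhdsGT hb] with h hh
  have hφ_le (y : ℝ) (hy : y ∈ Ioc 0 h) : ‖φ y‖ ≤ C * y ^ (a - 1) := by
    have := hbound ⟨hy.1, hy.2.trans hh.2⟩
    rwa [mem_ofPred_eq, norm_of_nonneg (rpow_nonneg hy.1.le _)] at this
  calc ‖∫ y in (0 : ℝ)..h, φ y‖ ≤ ∫ y in (0 : ℝ)..h, C * y ^ (a - 1) :=
        intervalIntegral.norm_integral_le_of_norm_le hh.1.le (.of_forall hφ_le)
          ((intervalIntegral.intervalIntegrable_rpow' (by linarith)).const_mul C)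
    _ = C / a * ‖h ^ a‖ := by
        rw [intervalIntegral.integral_const_mul, integral_rpow_sub_one ha,
          norm_of_nonneg (rpow_nonneg hh.1.le _)]
        ring

lemma integral_sub_integral_isBigO_rpow {φ ψ : ℝ → E} {a : ℝ} (ha : 0 < a)
    (hφ : IntegrableAtFilter φ (𝓝[>] 0)) (hψ : IntegrableAtFilter ψ (𝓝[>] 0))
    (hφψ : (fun y ↦ φ y - ψ y) =O[𝓝[>] 0] fun y ↦ y ^ (a - 1)) :
    (fun h ↦ (∫ y in (0 : ℝ)..h, φ y) - ∫ y in (0 : ℝ)..h, ψ y) =O[𝓝[>] 0] fun h ↦ h ^ a := by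
  refine (integral_isBigO_rpow ha hφψ).congr' ?_ .rfl
  filter_upwards [eventually_intervalIntegrable_of_integrableAtFilter hφ,
    eventually_intervalIntegrable_of_integrableAtFilter hψ] with h hφh hψh
  exact intervalIntegral.integral_sub hφh hψh

variable {M : ℝ → ℝ} {γ ν c : ℝ}

lemma tendsto_of_sub_isBigO_rpow (hν : 0 < ν)
    (hM : (fun y ↦ M y - c) =O[𝓝[>] 0] fun y ↦ y ^ ν) : Tendsto M (𝓝[>] 0) (𝓝 c) := by
  have hpow : Tendsto (fun y : ℝ ↦ y ^ ν) (𝓝[>] 0) (𝓝 0) := by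
    simpa only [zero_rpow hν.ne'] using
      (continuousAt_rpow_const 0 ν (.inr hν.le)).tendsto.mono_left nhdsWithin_le_nhds
  exact tendsto_sub_nhds_zero_iff.1 (hM.trans_tendsto hpow)

lemma rpow_mul_rpow_eventuallyEq (a b : ℝ) :
    (fun y : ℝ ↦ y ^ a * y ^ b) =ᶠ[𝓝[>] 0] fun y ↦ y ^ (a + b) := by
  filter_upwards [self_mem_nhdsWithin] with y hy using (rpow_add hy a b).symm

lemma integral_rpow_mul_sub_isBigO (hγ : 0 < γ) (hν : 0 < ν)
    (hM_meas : StronglyMeasurableAtFilter M (𝓝[>] 0))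
    (hM : (fun y ↦ M y - c) =O[𝓝[>] 0] fun y ↦ y ^ ν) :
    (fun h ↦ (∫ y in (0 : ℝ)..h, y ^ (γ - 1) * M y) - h ^ γ / γ * c) =O[𝓝[>] 0]
      fun h ↦ h ^ (γ + ν) := by
  have hpow := integrableAtFilter_rpow_sub_one hγ
  have hint : IntegrableAtFilter (fun y ↦ y ^ (γ - 1) * M y) (𝓝[>] 0) := by
    have hM_one : M =O[𝓝[>] 0] fun _ ↦ (1 : ℝ) := (tendsto_of_sub_isBigO_rpow hν hM).isBigO_one ℝ
    obtain ⟨s, hs, hMs⟩ := hM_meas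
    refine IsBigO.integrableAtFilter (g := fun y : ℝ ↦ y ^ (γ - 1)) ?_ ⟨s, hs, ?_⟩ hpow
    · simpa using (isBigO_refl (fun y : ℝ ↦ y ^ (γ - 1)) (𝓝[>] 0)).mul hM_one
    · exact (measurable_id.pow_const _).aestronglyMeasurable.mul hMs
  have hdiff : (fun y ↦ y ^ (γ - 1) * M y - y ^ (γ - 1) * c) =O[𝓝[>] 0]
      fun y ↦ y ^ (γ + ν - 1) := by
    simp_rw [← mul_sub, add_sub_right_comm]
    exact ((isBigO_refl _ _).mul hM).congr' .rfl (rpow_mul_rpow_eventuallyEq _ _)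
  have hpow_const : IntegrableAtFilter (fun y : ℝ ↦ y ^ (γ - 1) * c) (𝓝[>] 0) :=
    hpow.imp fun _ hs ↦ ⟨hs.1, hs.2.mul_const c⟩
  refine (integral_sub_integral_isBigO_rpow (by positivity) hint hpow_const hdiff).congr_left
    fun h ↦ ?_
  rw [intervalIntegral.integral_mul_const, integral_rpow_sub_one hγ]

lemma integral_rpow_mul_div_sub_one_isBigO_rpow (hγ : 0 < γ) (hν : 0 < ν) (hc : c ≠ 0)
    (hM_meas : StronglyMeasurableAtFilter M (𝓝[>] 0))
    (hM : (fun y ↦ M y - c) =O[𝓝[>] 0] fun y ↦ y ^ ν) :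
    (fun h ↦ (∫ y in (0 : ℝ)..h, y ^ (γ - 1) * M y) / (h ^ γ / γ * M h) - 1) =O[𝓝[>] 0]
      fun h ↦ h ^ ν := by
  have hMc : Tendsto M (𝓝[>] 0) (𝓝 c) := tendsto_of_sub_isBigO_rpow hν hM
  have hmain : (fun h ↦ h ^ γ / γ * (M h - c)) =O[𝓝[>] 0] fun h ↦ h ^ (γ + ν) := by
    simp_rw [div_eq_inv_mul, mul_assoc]
    exact (((isBigO_refl _ _).mul hM).congr' .rfl (rpow_mul_rpow_eventuallyEq _ _)).const_mul_left _
  have hnum : (fun h ↦ (∫ y in (0 : ℝ)..h, y ^ (γ - 1) * M y) - h ^ γ / γ * M h) =O[𝓝[>] 0]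
      fun h ↦ h ^ (γ + ν) :=
    ((integral_rpow_mul_sub_isBigO hγ hν hM_meas hM).sub hmain).congr_left fun h ↦ by ring
  have hden : (fun h ↦ γ * h ^ (-γ) * (M h)⁻¹) =O[𝓝[>] 0] fun h ↦ h ^ (-γ) := by
    simpa using ((isBigO_refl (fun h : ℝ ↦ h ^ (-γ)) (𝓝[>] 0)).const_mul_left γ).mul
      ((hMc.inv₀ hc).isBigO_one ℝ)
  refine (hnum.mul hden).congr' ?_ ?_
  · filter_upwards [self_mem_nhdsWithin, hMc.eventually_ne hc] with h (hh : 0 < h) hMh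
    have hhγ : h ^ γ ≠ 0 := (rpow_pos_of_pos hh γ).ne'
    rw [rpow_neg hh.le]
    field_simp
  · simpa only [add_neg_cancel_comm] using rpow_mul_rpow_eventuallyEq (γ + ν) (-γ)

end Integral

namespace SlowlyVaryingWithRemainder

variable {f g : ℝ → ℝ} {ν δ γ : ℝ}

lemma rpow_isBigO_rpow_mul (hf : SlowlyVaryingWithRemainder f ν) (hν : 0 < ν) :
    (fun h : ℝ ↦ h ^ ν) =O[𝓝[>] 0] fun h ↦ h ^ ν * f (1 / h) := by
  obtain ⟨c, hc, hfc⟩ := hf.exists_tendsto hν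
  have hone : (fun _ ↦ (1 : ℝ)) =O[𝓝[>] 0] fun h ↦ f h⁻¹ :=
    (isBigO_const_const 1 hc.ne' _).trans
      ((isEquivalent_const_iff_tendsto hc.ne').2 (hfc.comp tendsto_inv_nhdsGT_zero)).isBigO_symm
  simpa using (isBigO_refl (fun h : ℝ ↦ h ^ ν) (𝓝[>] 0)).mul hone

lemma integral_rpow_mul_div_sub_one_isBigO (hf : SlowlyVaryingWithRemainder f ν)
    (hg : SlowlyVaryingWithRemainder g δ) (hν : 0 < ν) (hνδ : ν ≤ δ) (hγ : 0 < γ) :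
    (fun h ↦ (∫ y in (0 : ℝ)..h, y ^ (γ - 1) * (g (1 / y) / f (1 / y))) /
      (h ^ γ / γ * (g (1 / h) / f (1 / h))) - 1) =O[𝓝[>] 0] fun h ↦ h ^ ν * f (1 / h) := by
  obtain ⟨c, hc, hL⟩ := hf.exists_div_sub_isBigO hg hν hνδ
  have hinv : Tendsto (fun y : ℝ ↦ 1 / y) (𝓝[>] 0) atTop := by
    simpa only [one_div] using tendsto_inv_nhdsGT_zero (𝕜 := ℝ)
  have hM : (fun y ↦ g (1 / y) / f (1 / y) - c) =O[𝓝[>] 0] fun y ↦ y ^ ν := by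
    refine (hL.comp_tendsto hinv).congr' .rfl ?_
    filter_upwards [self_mem_nhdsWithin] with y (hy : 0 < y)
    rw [Function.comp_apply, one_div, inv_rpow hy.le, rpow_neg hy.le, inv_inv]
  have hM_cont : ∀ᶠ y in 𝓝[>] 0, ContinuousAt (fun y ↦ g (1 / y) / f (1 / y)) y := by
    filter_upwards [self_mem_nhdsWithin, hinv.eventually hf.eventually_pos,
      hinv.eventually hf.eventually_continuousAt, hinv.eventually hg.eventually_continuousAt]
      with y (hy : 0 < y) hfy hfc hgc
    have hinv_cont : ContinuousAt (fun y : ℝ ↦ 1 / y) y := by fun_prop (disch := exact hy.ne')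
    exact (ContinuousAt.comp hgc hinv_cont).div (ContinuousAt.comp hfc hinv_cont) hfy.ne'
  exact (integral_rpow_mul_div_sub_one_isBigO_rpow hγ hν hc.ne'
    (stronglyMeasurableAtFilter_nhdsGT_of_continuousAt hM_cont) hM).trans
    (hf.rpow_isBigO_rpow_mul hν)

end SlowlyVaryingWithRemainder

lemma tendsto_const_sub_nhdsLT (a : ℝ) : Tendsto (fun s ↦ a - s) (𝓝[<] a) (𝓝[>] 0) := by
  refine tendsto_nhdsWithin_iff.2 ⟨?_, ?_⟩
  · simpa using (tendsto_id.const_sub a).mono_left (nhdsWithin_le_nhds (a := a) (s := Iio a))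
  · filter_upwards [self_mem_nhdsWithin] with s (hs : s < a) using sub_pos.2 hs

theorem stmt2_general {ν δ γ : ℝ} (hν : 0 < ν) (hγ : γ = δ - ν) (hγpos : 0 < γ) {𝓛 ℓ : ℝ → ℝ}
    (h𝓛pos : ∀ x ∈ Ici (1 : ℝ), 0 < 𝓛 x) (hℓpos : ∀ x ∈ Ici (1 : ℝ), 0 < ℓ x)
    (h𝓛cont : ContinuousOn 𝓛 (Ici 1)) (hℓcont : ContinuousOn ℓ (Ici 1))
    (h𝓛sv : ∀ c > 0, Tendsto (fun x ↦ 𝓛 (c * x) / 𝓛 x) atTop (𝓝 1))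
    (hℓsv : ∀ c > 0, Tendsto (fun x ↦ ℓ (c * x) / ℓ x) atTop (𝓝 1))
    (h𝓛rem : ∀ c > 0, (fun x ↦ 𝓛 (c * x) / 𝓛 x - 1) =O[atTop] fun x ↦ 𝓛 x / x ^ ν)
    (hℓrem : ∀ c > 0, (fun x ↦ ℓ (c * x) / ℓ x - 1) =O[atTop] fun x ↦ ℓ x / x ^ δ) :
    ∃ E : ℝ → ℝ,
      (E =O[𝓝[<] 1] fun s ↦ (1 - s) ^ ν * 𝓛 (1 / (1 - s))) ∧
      (∀ᶠ s in 𝓝[<] (1 : ℝ),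
        exp (-∫ x in s..(1 : ℝ), (1 - x) ^ (γ - 1) * (ℓ (1 / (1 - x)) / 𝓛 (1 / (1 - x)))) =
          exp (-(1 / γ) * ((1 - s) ^ γ * (ℓ (1 / (1 - s)) / 𝓛 (1 / (1 - s)))) * (1 + E s))) ∧
      ∀ s ∈ Ico (0 : ℝ) 1,
        (1 - s) ^ γ * (ℓ (1 / (1 - s)) / 𝓛 (1 / (1 - s))) =
          -(-(1 - s) ^ δ * ℓ (1 / (1 - s))) / ((1 - s) ^ ν * 𝓛 (1 / (1 - s))) := by
  have h𝓛 : SlowlyVaryingWithRemainder 𝓛 ν := .of_Ici h𝓛pos h𝓛cont h𝓛sv h𝓛rem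
  have hℓ : SlowlyVaryingWithRemainder ℓ δ := .of_Ici hℓpos hℓcont hℓsv hℓrem
  have hE := (h𝓛.integral_rpow_mul_div_sub_one_isBigO hℓ hν (by linarith) hγpos).comp_tendsto
    (tendsto_const_sub_nhdsLT 1)
  refine ⟨_, hE, ?_, fun s hs ↦ ?_⟩
  · filter_upwards [Ico_mem_nhdsLT zero_lt_one] with s hs
    have h1s : 0 < 1 - s := sub_pos.2 hs.2
    have hmem : 1 ≤ 1 / (1 - s) := (one_le_div h1s).2 (sub_le_self 1 hs.1)
    have hℓs := (hℓpos _ hmem).ne'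
    have h𝓛s := (h𝓛pos _ hmem).ne'
    have hpow := (rpow_pos_of_pos h1s γ).ne'
    have hsubst := intervalIntegral.integral_comp_sub_left (a := s) (b := 1)
      (fun y ↦ y ^ (γ - 1) * (ℓ (1 / y) / 𝓛 (1 / y))) 1
    rw [sub_self] at hsubst
    rw [hsubst]
    simp only [Function.comp_apply]
    congr 1
    field_simp
    ring
  · rw [hγ, rpow_sub (sub_pos.2 hs.2), neg_mul, neg_neg, div_mul_div_comm]

theorem stmt2
    (ν δ γ : ℝ) (hν0 : 0 < ν) (hν1 : ν < 1) (hδ0 : 0 < δ) (hδ1 : δ < 1)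
    (hγ : γ = δ - ν)
    (hγpos : 0 < γ)
    (𝓛 ℓ : ℝ → ℝ)
    (h𝓛pos : ∀ x ∈ Ici (1:ℝ), 0 < 𝓛 x) (hℓpos : ∀ x ∈ Ici (1:ℝ), 0 < ℓ x)
    (h𝓛cont : ContinuousOn 𝓛 (Ici 1)) (hℓcont : ContinuousOn ℓ (Ici 1))
    (h𝓛sv : ∀ lam > (0:ℝ), Tendsto (fun x => 𝓛 (lam * x) / 𝓛 x) atTop (nhds 1))
    (hℓsv : ∀ lam > (0:ℝ), Tendsto (fun x => ℓ (lam * x) / ℓ x) atTop (nhds 1))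
    (h𝓛rem : ∀ lam > (0:ℝ),
      (fun x => 𝓛 (lam * x) / 𝓛 x - 1) =O[atTop] fun x => 𝓛 x / x ^ ν)
    (hℓrem : ∀ lam > (0:ℝ),
      (fun x => ℓ (lam * x) / ℓ x - 1) =O[atTop] fun x => ℓ x / x ^ δ)
 :
    ∃ E : ℝ → ℝ,
      (E =O[nhdsWithin 1 (Iio 1)] fun s => (1 - s) ^ ν * 𝓛 (1 / (1 - s))) ∧
      (∀ᶠ s in nhdsWithin (1:ℝ) (Iio 1),
        Real.exp (-∫ x in s..(1:ℝ), (1 - x) ^ (γ - 1) * (ℓ (1 / (1 - x)) / 𝓛 (1 / (1 - x)))) =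
          Real.exp (-(1 / γ) * ((1 - s) ^ γ * (ℓ (1 / (1 - s)) / 𝓛 (1 / (1 - s)))) * (1 + E s))) ∧
      (∀ s ∈ Ico (0:ℝ) 1,
        (1 - s) ^ γ * (ℓ (1 / (1 - s)) / 𝓛 (1 / (1 - s))) =
          -(-(1 - s) ^ δ * ℓ (1 / (1 - s))) / ((1 - s) ^ ν * 𝓛 (1 / (1 - s)))) :=
  stmt2_general hν0 hγ hγpos h𝓛pos hℓpos h𝓛cont hℓcont h𝓛sv hℓsv h𝓛rem hℓrem
end

section
/- Assume only the basic hypothesis on f (0<ν<1, 𝓛 slowly varying). Define N(t)=(νt)^{1/ν}·R(t;0) for t>0 and M(t;s)=νt·(1 − R(t;s)/R(t;0)), so that R(t;s) = (N(t)/(νt)^{1/ν})·(1 − M(t;s)/(νt)). Then: (a) N is slowly varying at infinity; (b) N^{ν}(t)·𝓛( (νt)^{1/ν} / N(t) ) → 1 as t→∞; (c) M(t;0)=0 for all t>0; and (d) for each s∈[0,1), M(t;s) → 𝓜(s) := ∫_1^{1/(1−s)} dx / ( x^{1−ν}·𝓛(x) ) as t→∞, where 𝓜 is the generating function of the invariant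 measures of the Markov branching process. -/
open Real Filter Asymptotics Set MeasureTheory

/-!
The reciprocal `Y = 1 / R` of the survival probability `R = 1 - F` solves the autonomous equation
`Y' = b Y` with `b x = x ^ (1 - ν) * 𝓛 x`, so the time it needs to move from `x` to `y` is
`∫ u in x..y, 1 / b u`. Since `1 / b` is regularly varying with index `ν - 1 > -1`, Karamata's
theorem on integrals compares `t = ∫ u in Y 0..Y t, 1 / b u` with `Y t / (ν * b (Y t))`; this is
(b), and it says equally that `t * R' t / R t → -1 / ν`. Such an `R` is regularly varying with index
`-1 / ν`, which is (a), and satisfies `ν * t * (1 - R (t + m) / R t) → m` for every fixed `m`,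
which is (d) because the solution started from `s` is the one started from `0` advanced by the
time `𝓜 s`.

Karamata's theorem follows by dominated convergence from Potter's bound, whose only delicate
ingredient is a bound on the increments of `log f (exp z)` which is uniform over an interval of
translations; Baire's theorem provides it.
-/

section TranslationIncrements

variable {E : Type*} [NormedAddCommGroup E] {h : ℝ → E}

/-- The sets `{u | ‖h (x + u) - h x‖ ≤ n for all x ≥ n}` are closed and cover the line, so by Baire
one of them contains an interval `[c, c + δ]`; translating by `c` brings it back to `[0, δ]`. -/
theorem exists_pos_forall_Icc_norm_add_sub_le (hc : Continuous h)
    (hs : ∀ u, (fun x => h (x + u) - h x) =O[atTop] (1 : ℝ → ℝ)) :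
    ∃ δ > 0, ∃ C, ∀ᶠ x in atTop, ∀ v ∈ Icc 0 δ, ‖h (x + v) - h x‖ ≤ C := by
  let A : ℕ → Set ℝ := fun n => ⋂ x ∈ Ici (n : ℝ), {u | ‖h (x + u) - h x‖ ≤ n}
  have hA_closed (n : ℕ) : IsClosed (A n) :=
    isClosed_biInter fun x _ => isClosed_le (by fun_prop) continuous_const
  have hA_cover : ⋃ n, A n = univ := by
    refine eq_univ_of_forall fun u => ?_
    obtain ⟨C, hC⟩ := (hs u).bound
    obtain ⟨X, hX⟩ := eventually_atTop.1 hC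
    obtain ⟨n, hn⟩ := exists_nat_ge (max C X)
    refine mem_iUnion.2 ⟨n, mem_iInter₂.2 fun x hx => ?_⟩
    have hxC : ‖h (x + u) - h x‖ ≤ C := by simpa using hX x ((le_of_max_le_right hn).trans hx)
    exact hxC.trans (le_of_max_le_left hn)
  obtain ⟨n, c, hc_mem⟩ := nonempty_interior_of_iUnion_of_closed hA_closed hA_cover
  obtain ⟨r, hr, hball⟩ := Metric.isOpen_iff.1 isOpen_interior c hc_mem
  have hA_bound {u x : ℝ} (hu : |u - c| < r) (hx : n ≤ x) : ‖h (x + u) - h x‖ ≤ n :=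
    mem_iInter₂.1 (interior_subset (hball hu)) x hx
  refine ⟨r / 2, half_pos hr, n + n, ?_⟩
  filter_upwards [eventually_ge_atTop (n + c)] with x hx v ⟨hv0, hvr⟩
  have hxc : (n : ℝ) ≤ x - c := by linarith
  have hv := hA_bound (u := c + v) (by rw [add_sub_cancel_left, abs_of_nonneg hv0]; linarith) hxc
  have h0 := hA_bound (u := c) (by simpa using hr) hxc
  rw [show x - c + (c + v) = x + v by ring] at hv
  rw [sub_add_cancel] at h0
  calc ‖h (x + v) - h x‖ = ‖(h (x + v) - h (x - c)) - (h x - h (x - c))‖ := by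
        rw [sub_sub_sub_cancel_right]
    _ ≤ n + n := norm_sub_le_of_le hv h0

theorem norm_add_nat_mul_sub_le {δ ε X : ℝ} (hδ : 0 ≤ δ)
    (hstep : ∀ x ≥ X, ‖h (x + δ) - h x‖ ≤ ε) {x : ℝ} (hx : X ≤ x) (n : ℕ) :
    ‖h (x + n * δ) - h x‖ ≤ n * ε := by
  have hdist := dist_le_range_sum_of_dist_le (f := fun k : ℕ => h (x + k * δ)) n
    (d := fun _ => ε) fun {k} _ => by
      have hk : X ≤ x + k * δ := hx.trans (le_add_of_nonneg_right (by positivity))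
      rw [dist_comm, dist_eq_norm, Nat.cast_succ, add_one_mul, ← add_assoc]
      exact hstep _ hk
  simpa [dist_comm, dist_eq_norm, norm_sub_rev] using hdist

variable (hc : Continuous h) (hs : ∀ u, Tendsto (fun x => h (x + u) - h x) atTop (nhds 0))
include hc hs

theorem exists_eventually_norm_sub_le_add_mul {η : ℝ} (hη : 0 < η) :
    ∃ C, ∀ᶠ x in atTop, ∀ y ≥ x, ‖h y - h x‖ ≤ C + η * (y - x) := by
  obtain ⟨δ, hδ, C, hC⟩ := exists_pos_forall_Icc_norm_add_sub_le hc fun u => (hs u).isBigO_one ℝ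
  have hstep : ∀ᶠ x in atTop, ‖h (x + δ) - h x‖ ≤ η * δ :=
    (hs δ).norm.eventually_le_const (by simpa using mul_pos hη hδ)
  obtain ⟨X, hX⟩ := eventually_atTop.1 (hC.and hstep)
  refine ⟨C, ?_⟩
  filter_upwards [eventually_ge_atTop X] with x hx y hy
  let n := ⌊(y - x) / δ⌋₊
  have hn_le : n * δ ≤ y - x :=
    (le_div_iff₀ hδ).1 (Nat.floor_le (div_nonneg (sub_nonneg.2 hy) hδ.le))
  have hn_lt : y - x < (n + 1) * δ := (div_lt_iff₀ hδ).1 (Nat.lt_floor_add_one _)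
  have hnδ : 0 ≤ n * δ := by positivity
  have hsteps : ‖h (x + n * δ) - h x‖ ≤ n * (η * δ) :=
    norm_add_nat_mul_sub_le hδ.le (fun z hz => (hX z hz).2) hx n
  have hlast : ‖h y - h (x + n * δ)‖ ≤ C := by
    simpa using (hX (x + n * δ) (by linarith)).1 (y - (x + n * δ)) ⟨by linarith, by linarith⟩
  calc ‖h y - h x‖ ≤ ‖h y - h (x + n * δ)‖ + ‖h (x + n * δ) - h x‖ :=
        norm_sub_le_norm_sub_add_norm_sub ..
    _ ≤ C + η * (n * δ) := by linarith
    _ ≤ C + η * (y - x) := by gcongr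

theorem exists_norm_sub_le_add_mul (a : ℝ) {η : ℝ} (hη : 0 < η) :
    ∃ C, ∀ x ≥ a, ∀ y ≥ x, ‖h y - h x‖ ≤ C + η * (y - x) := by
  obtain ⟨C, hC⟩ := exists_eventually_norm_sub_le_add_mul hc hs hη
  obtain ⟨X, hX⟩ := eventually_atTop.1 hC
  obtain ⟨B, hB⟩ := (isCompact_Icc (a := a) (b := X)).exists_bound_of_continuousOn
    (f := fun x => h X - h x) (by fun_prop)
  have hC0 : 0 ≤ C := by simpa using hX X le_rfl X le_rfl
  refine ⟨C + 2 * |B|, fun x hx y hy => ?_⟩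
  have hB' {z : ℝ} (hz : a ≤ z) (hzX : z ≤ X) : ‖h X - h z‖ ≤ |B| :=
    (hB z ⟨hz, hzX⟩).trans (le_abs_self B)
  have hηxy : 0 ≤ η * (y - x) := mul_nonneg hη.le (sub_nonneg.2 hy)
  rcases le_total X x with hXx | hxX
  · linarith [hX x hXx y hy, abs_nonneg B]
  have htri : ‖h y - h x‖ ≤ ‖h y - h X‖ + ‖h X - h x‖ := norm_sub_le_norm_sub_add_norm_sub ..
  rcases le_total X y with hXy | hyX
  · have : η * (y - X) ≤ η * (y - x) := by gcongr
    linarith [hX X le_rfl y hXy, hB' hx hxX, abs_nonneg B]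
  · linarith [hB' hx hxX, norm_sub_rev (h y) (h X) ▸ hB' (hx.trans hy) hyX]

end TranslationIncrements

/-- Regular variation at infinity with index `ρ`; index `0` is slow variation. The function is
assumed neither measurable nor positive. -/
def RegularlyVarying (f : ℝ → ℝ) (ρ : ℝ) : Prop :=
  ∀ c > 0, Tendsto (fun x => f (c * x) / f x) atTop (nhds (c ^ ρ))

section RegularVariation

variable {f g : ℝ → ℝ} {ρ σ a : ℝ}

theorem regularlyVarying_zero_iff :
    RegularlyVarying f 0 ↔ ∀ c > 0, Tendsto (fun x => f (c * x) / f x) atTop (nhds 1) := by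
  simp only [RegularlyVarying, rpow_zero]

theorem regularlyVarying_const_mul_rpow {c : ℝ} (hc : 0 < c) (p : ℝ) :
    RegularlyVarying (fun t => (c * t) ^ p) p := fun d hd => by
  refine tendsto_const_nhds.congr' ?_
  filter_upwards [eventually_gt_atTop 0] with t ht
  rw [mul_left_comm, mul_rpow hd.le (by positivity), mul_div_cancel_right₀ _ (by positivity)]

theorem integral_div_mul_eq_integral_indicator {x : ℝ} (ha : 0 ≤ a) (hx : 0 < x) (hax : a ≤ x) :
    (∫ u in a..x, f u) / (x * f x) =
      ∫ v in 0..1, (Ioi (a / x)).indicator (fun v => f (x * v) / f x) v := by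
  have hsubst : x * ∫ v in a / x..1, f (x * v) = ∫ u in a..x, f u := by
    rw [intervalIntegral.mul_integral_comp_mul_left, mul_div_cancel₀ a hx.ne', mul_one]
  rw [intervalIntegral.integral_of_le zero_le_one, setIntegral_indicator measurableSet_Ioi,
    Ioc_inter_Ioi, max_eq_right (div_nonneg ha hx.le),
    ← intervalIntegral.integral_of_le ((div_le_one hx).2 hax), intervalIntegral.integral_div,
    ← hsubst, mul_div_mul_left _ _ hx.ne']

namespace RegularlyVarying

theorem mul (hf : RegularlyVarying f ρ) (hg : RegularlyVarying g σ) :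
    RegularlyVarying (fun x => f x * g x) (ρ + σ) := fun c hc => by
  simpa only [rpow_add hc, mul_div_mul_comm] using (hf c hc).mul (hg c hc)

theorem inv (hf : RegularlyVarying f ρ) : RegularlyVarying (fun x => (f x)⁻¹) (-ρ) :=
  fun c hc => by
  simpa only [rpow_neg hc.le, inv_div_inv, inv_div] using (hf c hc).inv₀ (rpow_pos_of_pos hc ρ).ne'

theorem tendsto_log_comp_exp_add_sub (hf : RegularlyVarying f ρ) (hpos : ∀ᶠ x in atTop, 0 < f x)
    (u : ℝ) :
    Tendsto (fun z => log (f (exp (z + u))) - log (f (exp z))) atTop (nhds (ρ * u)) := by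
  have hlog := ((hf (exp u) (exp_pos u)).comp tendsto_exp_atTop).log (by positivity)
  rw [← exp_mul, log_exp, mul_comm] at hlog
  have hpos' : ∀ᶠ z in atTop, 0 < f (exp z) := tendsto_exp_atTop.eventually hpos
  refine hlog.congr' ?_
  filter_upwards [hpos', (tendsto_atTop_add_const_right _ u tendsto_id).eventually hpos']
    with z hz hzu
  rw [id, exp_add, mul_comm] at hzu
  rw [exp_add, mul_comm (exp z)]
  exact log_div hzu.ne' hz.ne'

theorem exists_potter_bound (hf : RegularlyVarying f ρ) (ha : 0 < a)
    (hcont : ContinuousOn f (Ici a)) (hpos : ∀ x ∈ Ici a, 0 < f x) (hσ : σ < ρ) :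
    ∃ C, ∀ x ≥ a, ∀ y ≥ x, f x / f y ≤ C * (x / y) ^ σ := by
  let h : ℝ → ℝ := fun z => log (f (exp (max z (log a)))) - ρ * z
  have hmem (z : ℝ) : exp (max z (log a)) ∈ Ici a :=
    (log_le_iff_le_exp ha).1 (le_max_right z (log a))
  have hh_exp {x : ℝ} (hx : a ≤ x) : h (log x) = log (f x) - ρ * log x := by
    simp only [h, max_eq_left (log_le_log ha hx), exp_log (ha.trans_le hx)]
  have hh_cont : Continuous h :=
    ((hcont.comp_continuous (by fun_prop) hmem).log fun z => (hpos _ (hmem z)).ne').sub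
      (by fun_prop)
  have hh_incr (u : ℝ) : Tendsto (fun z => h (z + u) - h z) atTop (nhds 0) := by
    have hlim := (hf.tendsto_log_comp_exp_add_sub
      ((eventually_ge_atTop a).mono hpos) u).sub_const (ρ * u)
    rw [sub_self] at hlim
    refine hlim.congr' ?_
    filter_upwards [eventually_ge_atTop (log a), eventually_ge_atTop (log a - u)] with z hz hzu
    simp only [h, max_eq_left hz, max_eq_left (sub_le_iff_le_add.1 hzu)]
    ring
  obtain ⟨C, hC⟩ := exists_norm_sub_le_add_mul hh_cont hh_incr (log a) (sub_pos.2 hσ)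
  refine ⟨exp C, fun x hx y hy => ?_⟩
  have hay : a ≤ y := hx.le.trans hy
  have hx0 : 0 < x := ha.trans_le hx
  have hy0 : 0 < y := ha.trans_le hay
  have hbound := (neg_le_abs _).trans (hC _ (log_le_log ha hx) _ (log_le_log hx0 hy))
  rw [hh_exp hx, hh_exp hay] at hbound
  rw [← log_le_log_iff (div_pos (hpos x hx) (hpos y hay)) (by positivity),
    log_div (hpos x hx).ne' (hpos y hay).ne', log_mul (exp_pos C).ne' (by positivity), log_exp,
    log_rpow (by positivity), log_div hx0.ne' hy0.ne']
  linarith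

variable (hf : RegularlyVarying f ρ) (ha : 0 < a) (hcont : ContinuousOn f (Ici a))
  (hpos : ∀ x ∈ Ici a, 0 < f x) (hρ : -1 < ρ)
include hf ha hcont hpos hρ

theorem tendsto_integral_indicator_comp_mul_div :
    Tendsto (fun x => ∫ v in 0..1, (Ioi (a / x)).indicator (fun v => f (x * v) / f x) v)
      atTop (nhds (1 / (ρ + 1))) := by
  obtain ⟨σ, hσ, hσρ⟩ := exists_between hρ
  obtain ⟨C, hC⟩ := hf.exists_potter_bound ha hcont hpos hσρ
  have hmem {x v : ℝ} (hx : a ≤ x) (hv : v ∈ Ioi (a / x)) : a ≤ x * v :=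
    ((div_lt_iff₀' (ha.trans_le hx)).1 hv).le
  have hC0 : 0 ≤ C := by
    have hCa := hC a le_rfl a le_rfl
    rw [div_self (hpos a self_mem_Ici).ne', div_self ha.ne', one_rpow, mul_one] at hCa
    exact zero_le_one.trans hCa
  have hlimit : ∫ v in (0 : ℝ)..1, v ^ ρ = 1 / (ρ + 1) := by
    rw [integral_rpow (.inl hρ), one_rpow, zero_rpow (by linarith), sub_zero]
  rw [← hlimit]
  refine intervalIntegral.tendsto_integral_filter_of_dominated_convergence
    (fun v => C * v ^ σ) ?_ ?_ ?_ ?_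
  · filter_upwards [eventually_ge_atTop a] with x hx
    refine (aestronglyMeasurable_indicator_iff measurableSet_Ioi).2 ?_ |>.mono_measure
      Measure.restrict_le_self
    refine ContinuousOn.aestronglyMeasurable ?_ measurableSet_Ioi
    exact (hcont.comp (by fun_prop) fun v hv => hmem hx hv).div_const _
  · filter_upwards [eventually_ge_atTop a] with x hx
    filter_upwards with v hv
    rw [uIoc_of_le zero_le_one] at hv
    rw [norm_indicator_eq_indicator_norm]
    refine indicator_apply_le' (fun hvx => ?_) fun _ => by have := hv.1; positivity
    have hx0 : 0 < x := ha.trans_le hx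
    have hpotter := hC (x * v) (hmem hx hvx) x (mul_le_of_le_one_right hx0.le hv.2)
    rw [mul_div_cancel_left₀ v hx0.ne'] at hpotter
    rwa [norm_of_nonneg (div_pos (hpos _ (hmem hx hvx)) (hpos x hx)).le]
  · exact (intervalIntegral.intervalIntegrable_rpow' hσ).const_mul C
  · filter_upwards with v hv
    rw [uIoc_of_le zero_le_one] at hv
    refine (hf v hv.1).congr' ?_
    filter_upwards [eventually_gt_atTop (a / v), eventually_gt_atTop 0] with x hx hx0
    rw [indicator_of_mem (mem_Ioi.2 ((div_lt_comm₀ hv.1 hx0).1 hx)), mul_comm]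

theorem tendsto_karamata_ratio :
    Tendsto (fun x => (∫ u in a..x, f u) / (x * f x)) atTop (nhds (1 / (ρ + 1))) := by
  refine (hf.tendsto_integral_indicator_comp_mul_div ha hcont hpos hρ).congr' ?_
  filter_upwards [eventually_ge_atTop a] with x hx
  exact (integral_div_mul_eq_integral_indicator ha.le (ha.trans_le hx) hx).symm

end RegularlyVarying

end RegularVariation

section Elasticity

theorem isLittleO_sub_sub_smul_of_tendsto_deriv {E ι : Type*} [NormedAddCommGroup E]
    [NormedSpace ℝ E] {f f' : ℝ → E} {e : E} (hf : ∀ᶠ x in atTop, HasDerivAt f (f' x) x)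
    (hf' : Tendsto f' atTop (nhds e)) {l : Filter ι} {x y : ι → ℝ} (hx : Tendsto x l atTop)
    (hy : Tendsto y l atTop) :
    (fun i => f (y i) - f (x i) - (y i - x i) • e) =o[l] fun i => y i - x i := by
  refine isLittleO_iff.2 fun ε hε => ?_
  have hclose : ∀ᶠ x in atTop, ‖f' x - e‖ ≤ ε :=
    (tendsto_iff_norm_sub_tendsto_zero.1 hf').eventually_le_const hε
  obtain ⟨X, hX⟩ := eventually_atTop.1 (hf.and hclose)
  filter_upwards [hx.eventually_ge_atTop X, hy.eventually_ge_atTop X] with i hxi hyi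
  have hmvt := (convex_Ici X).norm_image_sub_le_of_norm_hasDerivWithin_le
    (f := fun z => f z - z • e) (f' := fun z => f' z - (1 : ℝ) • e)
    (fun z hz => ((hX z hz).1.sub ((hasDerivAt_id z).smul_const e)).hasDerivWithinAt)
    (fun z hz => by simpa using (hX z hz).2) hxi hyi
  rwa [show f (y i) - f (x i) - (y i - x i) • e = f (y i) - y i • e - (f (x i) - x i • e) by
    rw [sub_smul]; abel]

theorem tendsto_mul_exp_sub_one {ι : Type*} {l : Filter ι} {t d : ι → ℝ} {κ : ℝ}
    (ht : Tendsto t l atTop) (htd : Tendsto (fun i => t i * d i) l (nhds κ)) :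
    Tendsto (fun i => t i * (exp (d i) - 1)) l (nhds κ) := by
  have hd : Tendsto d l (nhds 0) := by
    refine (htd.div_atTop ht).congr' ?_
    filter_upwards [ht.eventually_gt_atTop 0] with i hi
    rw [mul_div_cancel_left₀ _ hi.ne']
  have hslope : Tendsto (fun i => dslope exp 0 (d i)) l (nhds 1) := by
    have hcont := (continuousAt_dslope_same.2 (differentiableAt_exp (x := 0))).tendsto.comp hd
    simpa [dslope_same] using! hcont
  refine (by simpa using htd.mul hslope : Tendsto _ l (nhds κ)).congr fun i => ?_
  have hmul := sub_smul_dslope exp 0 (d i)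
  rw [sub_zero, exp_zero, smul_eq_mul] at hmul
  rw [mul_assoc, hmul]

variable {f f' : ℝ → ℝ} {ρ : ℝ} (hpos : ∀ᶠ t in atTop, 0 < f t)
  (hf : ∀ᶠ t in atTop, HasDerivAt f (f' t) t)
  (hρ : Tendsto (fun t => t * f' t / f t) atTop (nhds ρ))
include hpos hf hρ

/-- In logarithmic coordinates `t * f' t / f t` is the derivative of `log f`. -/
theorem isLittleO_log_sub_log_of_tendsto_elasticity {ι : Type*} {l : Filter ι} {s t : ι → ℝ}
    (hs : Tendsto s l atTop) (ht : Tendsto t l atTop) :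
    (fun i => log (f (t i)) - log (f (s i)) - (log (t i) - log (s i)) * ρ) =o[l]
      fun i => log (t i) - log (s i) := by
  have hderiv : ∀ᶠ z in atTop, HasDerivAt (fun z => log (f (exp z)))
      (exp z * f' (exp z) / f (exp z)) z := by
    filter_upwards [tendsto_exp_atTop.eventually (hpos.and hf)] with z ⟨hz_pos, hz⟩
    rw [mul_comm]
    exact (hz.comp z (hasDerivAt_exp z)).log hz_pos.ne'
  refine (isLittleO_sub_sub_smul_of_tendsto_deriv hderiv (hρ.comp tendsto_exp_atTop)
    (tendsto_log_atTop.comp hs) (tendsto_log_atTop.comp ht)).congr' ?_ .rfl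
  filter_upwards [hs.eventually_gt_atTop 0, ht.eventually_gt_atTop 0] with i hsi hti
  simp only [Function.comp_apply, exp_log hsi, exp_log hti, smul_eq_mul]

theorem regularlyVarying_of_tendsto_elasticity : RegularlyVarying f ρ := fun c hc => by
  have hmul : Tendsto (fun t : ℝ => c * t) atTop atTop := tendsto_id.const_mul_atTop hc
  have hlog : ∀ᶠ t in atTop, log (c * t) - log t = log c := by
    filter_upwards [eventually_gt_atTop 0] with t ht
    rw [log_mul hc.ne' ht.ne', add_sub_cancel_right]
  have ho := (isLittleO_log_sub_log_of_tendsto_elasticity hpos hf hρ tendsto_id hmul).trans_isBigO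
    ((EventuallyEq.isBigO hlog).trans (isBigO_const_const (log c) (one_ne_zero' ℝ) atTop))
  have hexp := (((isLittleO_one_iff ℝ).1 ho).add_const (log c * ρ)).rexp
  rw [zero_add, ← rpow_def_of_pos hc] at hexp
  refine hexp.congr' ?_
  filter_upwards [hpos, hmul.eventually hpos, hlog] with t ht hct hlogt
  rw [id, hlogt, sub_add_cancel, exp_sub, exp_log hct, exp_log ht]

theorem tendsto_mul_div_sub_one_of_tendsto_elasticity (m : ℝ) :
    Tendsto (fun t => t * (f (t + m) / f t - 1)) atTop (nhds (ρ * m)) := by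
  have hadd : Tendsto (fun t : ℝ => t + m) atTop atTop :=
    tendsto_atTop_add_const_right _ m tendsto_id
  have hδ : Tendsto (fun t => t * (log (t + m) - log t)) atTop (nhds m) := by
    refine (tendsto_mul_log_one_add_div_atTop m).congr' ?_
    filter_upwards [eventually_gt_atTop 0, hadd.eventually_gt_atTop 0] with t ht htm
    rw [← log_div htm.ne' ht.ne', add_div, div_self ht.ne']
  have hd : Tendsto (fun t => t * (log (f (t + m)) - log (f t))) atTop (nhds (ρ * m)) := by
    have ho := ((isBigO_refl (fun t : ℝ => t) atTop).mul_isLittleO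
      (isLittleO_log_sub_log_of_tendsto_elasticity hpos hf hρ tendsto_id hadd)).trans_isBigO
      (hδ.isBigO_one ℝ)
    have hsum := ((isLittleO_one_iff ℝ).1 ho).add (hδ.const_mul ρ)
    rw [zero_add] at hsum
    refine hsum.congr fun t => ?_
    simp only [id]
    ring
  refine (tendsto_mul_exp_sub_one tendsto_id hd).congr' ?_
  filter_upwards [hpos, hadd.eventually hpos] with t ht htm
  rw [exp_sub, exp_log htm, exp_log ht, id]

end Elasticity

section AutonomousODE

variable {b Y Z : ℝ → ℝ} {a : ℝ}

/-- The time which a solution of the autonomous equation `Y' = b Y` takes to move from `x` to `y`,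
meaningful when `b` is continuous and positive between them.
For `b x = x ^ (1 - ν) * 𝓛 x` this is the paper's `𝓜` as `𝓜 s = passageTime b 1 (1 / (1 - s))`. -/
noncomputable def passageTime (b : ℝ → ℝ) (x y : ℝ) : ℝ :=
  ∫ u in x..y, 1 / b u

variable (hb : ContinuousOn b (Ici a)) (hb0 : ∀ x ∈ Ici a, 0 < b x)
include hb hb0

theorem intervalIntegrable_one_div_of_pos {x y : ℝ} (hx : a ≤ x) (hy : a ≤ y) :
    IntervalIntegrable (fun u => 1 / b u) volume x y :=
  ((continuousOn_const.div hb fun u hu => (hb0 u hu).ne').mono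
    (ordConnected_Ici.uIcc_subset hx hy)).intervalIntegrable

theorem passageTime_add {x y z : ℝ} (hx : a ≤ x) (hy : a ≤ y) (hz : a ≤ z) :
    passageTime b x y + passageTime b y z = passageTime b x z :=
  intervalIntegral.integral_add_adjacent_intervals (intervalIntegrable_one_div_of_pos hb hb0 hx hy)
    (intervalIntegrable_one_div_of_pos hb hb0 hy hz)

theorem passageTime_pos {x y : ℝ} (hx : a ≤ x) (hxy : x < y) : 0 < passageTime b x y :=
  intervalIntegral.intervalIntegral_pos_of_pos_on
    (intervalIntegrable_one_div_of_pos hb hb0 hx (hx.trans hxy.le))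
    (fun u hu => one_div_pos.2 (hb0 u (hx.trans hu.1.le))) hxy

theorem strictMonoOn_passageTime {x : ℝ} (hx : a ≤ x) : StrictMonoOn (passageTime b x) (Ici a) :=
  fun y hy z hz hyz => by
    rw [← passageTime_add hb hb0 hx hy hz]
    exact lt_add_of_pos_right _ (passageTime_pos hb hb0 hy hyz)

variable (hY : IsIntegralCurveOn Y (fun _ => b) (Ici 0)) (hYa : ∀ t ≥ 0, a ≤ Y t)
include hY hYa

theorem passageTime_of_isIntegralCurveOn {t : ℝ} (ht : 0 ≤ t) :
    passageTime b (Y 0) (Y t) = t := by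
  have hIci : uIcc 0 t ⊆ Ici 0 := uIcc_of_le ht ▸ Icc_subset_Ici_self
  have hYcont : ContinuousOn Y (uIcc 0 t) := hY.continuousOn.mono hIci
  have hYa' : MapsTo Y (uIcc 0 t) (Ici a) := fun u hu => hYa u (hIci hu)
  have hsubst := intervalIntegral.integral_comp_mul_deriv'' (g := fun u => 1 / b u) hYcont
    (fun u hu => by
      rw [min_eq_left ht] at hu
      exact (hY u hu.1.le).mono (Ioi_subset_Ici hu.1.le))
    (hb.comp hYcont hYa')
    ((continuousOn_const.div hb fun u hu => (hb0 u hu).ne').mono hYa'.image_subset)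
  calc passageTime b (Y 0) (Y t) = ∫ _ in 0..t, (1 : ℝ) := by
        rw [passageTime, ← hsubst]
        exact intervalIntegral.integral_congr fun u hu =>
          one_div_mul_cancel (hb0 _ (hYa' hu)).ne'
    _ = t := by simp

theorem tendsto_atTop_of_isIntegralCurveOn : Tendsto Y atTop atTop := by
  refine tendsto_atTop.2 fun B => ?_
  filter_upwards [eventually_ge_atTop 0,
    eventually_ge_atTop (passageTime b (Y 0) (max a B))] with t ht htB
  rw [← passageTime_of_isIntegralCurveOn hb hb0 hY hYa ht] at htB
  exact le_of_max_le_right <| ((strictMonoOn_passageTime hb hb0 (hYa 0 le_rfl)).le_iff_le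
    (le_max_left a B) (hYa t ht)).1 htB

theorem tendsto_elasticity_of_isIntegralCurveOn {σ : ℝ} (ha : 0 < a) (hbσ : RegularlyVarying b σ)
    (hσ : σ < 1) : Tendsto (fun t => t * b (Y t) / Y t) atTop (nhds (1 / (1 - σ))) := by
  have hY0 : Ici (Y 0) ⊆ Ici a := Ici_subset_Ici.2 (hYa 0 le_rfl)
  have hkaramata := hbσ.inv.tendsto_karamata_ratio (ha.trans_le (hYa 0 le_rfl))
    ((hb.inv₀ fun u hu => (hb0 u hu).ne').mono hY0) (fun u hu => inv_pos.2 (hb0 u (hY0 hu)))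
    (neg_lt_neg hσ)
  rw [neg_add_eq_sub] at hkaramata
  refine (hkaramata.comp (tendsto_atTop_of_isIntegralCurveOn hb hb0 hY hYa)).congr' ?_
  filter_upwards [eventually_ge_atTop 0] with t ht
  have htime := passageTime_of_isIntegralCurveOn hb hb0 hY hYa ht
  simp only [passageTime, one_div] at htime
  rw [Function.comp_apply, htime, ← div_eq_mul_inv, div_div_eq_mul_div]

theorem eq_comp_add_passageTime_of_isIntegralCurveOn (hZ : IsIntegralCurveOn Z (fun _ => b) (Ici 0))
    (hZa : ∀ t ≥ 0, a ≤ Z t) (h0 : Y 0 ≤ Z 0) {t : ℝ} (ht : 0 ≤ t) :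
    Z t = Y (t + passageTime b (Y 0) (Z 0)) := by
  have hY0 : a ≤ Y 0 := hYa 0 le_rfl
  have hZ0 : a ≤ Z 0 := hZa 0 le_rfl
  have hmono := strictMonoOn_passageTime hb hb0 hY0
  have hdelay : 0 ≤ passageTime b (Y 0) (Z 0) := by
    simpa [passageTime] using hmono.monotoneOn hY0 hZ0 h0
  have htime : 0 ≤ t + passageTime b (Y 0) (Z 0) := add_nonneg ht hdelay
  refine hmono.injOn (hZa t ht) (hYa _ htime) ?_
  rw [passageTime_of_isIntegralCurveOn hb hb0 hY hYa htime,
    ← passageTime_add hb hb0 hY0 hZ0 (hZa t ht),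
    passageTime_of_isIntegralCurveOn hb hb0 hZ hZa ht, add_comm]

end AutonomousODE

section BackwardKolmogorov

variable {ν : ℝ} {𝓛 : ℝ → ℝ} {y z : ℝ → ℝ}

/-- Solutions in `[0, 1)` of the backward Kolmogorov equation `y' = f y`, where
`f s = (1 - s) ^ (1 + ν) * 𝓛 (1 / (1 - s))`; here `y` is `t ↦ F(t; s)` for a fixed `s`. -/
structure IsBackwardSolution (ν : ℝ) (𝓛 : ℝ → ℝ) (y : ℝ → ℝ) : Prop where
  nonneg : ∀ t ≥ 0, 0 ≤ y t
  lt_one : ∀ t ≥ 0, y t < 1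
  hasDerivAt : ∀ t ≥ 0, HasDerivAt y ((1 - y t) ^ (1 + ν) * 𝓛 (1 / (1 - y t))) t

/-- The vector field `x ^ 2 * f (1 - 1 / x)` obeyed by the reciprocal `x = 1 / (1 - y)` of the
survival probability when `y' = f y`. -/
noncomputable def reciprocalDrift (ν : ℝ) (𝓛 : ℝ → ℝ) (x : ℝ) : ℝ :=
  x ^ (1 - ν) * 𝓛 x

theorem regularlyVarying_reciprocalDrift (h𝓛 : RegularlyVarying 𝓛 0) :
    RegularlyVarying (reciprocalDrift ν 𝓛) (1 - ν) := by
  simpa using! (regularlyVarying_const_mul_rpow one_pos (1 - ν)).mul h𝓛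

theorem continuousOn_reciprocalDrift (h𝓛 : ContinuousOn 𝓛 (Ici 1)) :
    ContinuousOn (reciprocalDrift ν 𝓛) (Ici 1) :=
  (continuousOn_id.rpow_const fun _ hx => .inl (zero_lt_one.trans_le hx).ne').mul h𝓛

theorem reciprocalDrift_pos (h𝓛 : ∀ x ∈ Ici (1 : ℝ), 0 < 𝓛 x) :
    ∀ x ∈ Ici (1 : ℝ), 0 < reciprocalDrift ν 𝓛 x :=
  fun x hx => mul_pos (rpow_pos_of_pos (zero_lt_one.trans_le hx) _) (h𝓛 x hx)

theorem reciprocalDrift_one_div {r : ℝ} (hr : 0 < r) :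
    reciprocalDrift ν 𝓛 (1 / r) = r ^ ν * 𝓛 (1 / r) / r := by
  rw [reciprocalDrift, one_div, inv_rpow hr.le, ← rpow_neg hr.le, neg_sub, rpow_sub_one hr.ne',
    div_mul_eq_mul_div]

/-- The paper's `N t = (ν * t) ^ (1 / ν) * R t`, where `R = 1 - y`. -/
noncomputable def normalizedSurvival (ν : ℝ) (y : ℝ → ℝ) (t : ℝ) : ℝ :=
  (ν * t) ^ (1 / ν) * (1 - y t)

namespace IsBackwardSolution

theorem one_sub_pos (hy : IsBackwardSolution ν 𝓛 y) {t : ℝ} (ht : 0 ≤ t) : 0 < 1 - y t :=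
  sub_pos.2 (hy.lt_one t ht)

theorem one_le_one_div_one_sub (hy : IsBackwardSolution ν 𝓛 y) (t : ℝ) (ht : t ≥ 0) :
    1 ≤ 1 / (1 - y t) :=
  one_le_one_div (hy.one_sub_pos ht) (sub_le_self 1 (hy.nonneg t ht))

theorem hasDerivAt_one_sub (hy : IsBackwardSolution ν 𝓛 y) {t : ℝ} (ht : 0 ≤ t) :
    HasDerivAt (fun t => 1 - y t) (-((1 - y t) ^ (1 + ν) * 𝓛 (1 / (1 - y t)))) t :=
  (hy.hasDerivAt t ht).const_sub 1

theorem isIntegralCurveOn_one_div (hy : IsBackwardSolution ν 𝓛 y) :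
    IsIntegralCurveOn (fun t => 1 / (1 - y t)) (fun _ => reciprocalDrift ν 𝓛) (Ici 0) := by
  intro t ht
  have hr := hy.one_sub_pos ht
  simp only [one_div]
  refine ((hy.hasDerivAt_one_sub ht).inv hr.ne').hasDerivWithinAt.congr_deriv ?_
  rw [← one_div (1 - y t), reciprocalDrift_one_div hr, rpow_add hr, rpow_one]
  field_simp

variable (h𝓛pos : ∀ x ∈ Ici (1 : ℝ), 0 < 𝓛 x) (h𝓛cont : ContinuousOn 𝓛 (Ici 1))
include h𝓛pos h𝓛cont

theorem one_sub_eq_one_sub_comp_add (hy : IsBackwardSolution ν 𝓛 y)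
    (hz : IsBackwardSolution ν 𝓛 z) (hyz : y 0 ≤ z 0) {t : ℝ} (ht : 0 ≤ t) :
    1 - z t = 1 - y (t + passageTime (reciprocalDrift ν 𝓛) (1 / (1 - y 0)) (1 / (1 - z 0))) :=
  inv_injective <| by
    simpa only [one_div] using eq_comp_add_passageTime_of_isIntegralCurveOn
      (continuousOn_reciprocalDrift h𝓛cont) (reciprocalDrift_pos h𝓛pos)
      hy.isIntegralCurveOn_one_div hy.one_le_one_div_one_sub
      hz.isIntegralCurveOn_one_div hz.one_le_one_div_one_sub
      (one_div_le_one_div_of_le (hz.one_sub_pos le_rfl) (by gcongr)) ht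

variable (hν : 0 < ν) (h𝓛 : RegularlyVarying 𝓛 0)
include hν h𝓛

theorem tendsto_mul_rpow_mul (hy : IsBackwardSolution ν 𝓛 y) :
    Tendsto (fun t => t * ((1 - y t) ^ ν * 𝓛 (1 / (1 - y t)))) atTop (nhds (1 / ν)) := by
  have helast := tendsto_elasticity_of_isIntegralCurveOn (continuousOn_reciprocalDrift h𝓛cont)
    (reciprocalDrift_pos h𝓛pos) hy.isIntegralCurveOn_one_div hy.one_le_one_div_one_sub one_pos
    (regularlyVarying_reciprocalDrift h𝓛) (sub_lt_self 1 hν)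
  rw [sub_sub_cancel] at helast
  refine helast.congr' ?_
  filter_upwards [eventually_ge_atTop 0] with t ht
  have hr := hy.one_sub_pos ht
  rw [reciprocalDrift_one_div hr]
  field_simp

theorem tendsto_elasticity_one_sub (hy : IsBackwardSolution ν 𝓛 y) :
    Tendsto (fun t => t * -((1 - y t) ^ (1 + ν) * 𝓛 (1 / (1 - y t))) / (1 - y t)) atTop
      (nhds (-(1 / ν))) := by
  refine (hy.tendsto_mul_rpow_mul h𝓛pos h𝓛cont hν h𝓛).neg.congr' ?_
  filter_upwards [eventually_ge_atTop 0] with t ht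
  have hr := hy.one_sub_pos ht
  rw [rpow_add hr, rpow_one]
  field_simp

theorem regularlyVarying_one_sub (hy : IsBackwardSolution ν 𝓛 y) :
    RegularlyVarying (fun t => 1 - y t) (-(1 / ν)) :=
  regularlyVarying_of_tendsto_elasticity
    ((eventually_ge_atTop 0).mono fun _ => hy.one_sub_pos)
    ((eventually_ge_atTop 0).mono fun _ => hy.hasDerivAt_one_sub)
    (hy.tendsto_elasticity_one_sub h𝓛pos h𝓛cont hν h𝓛)

theorem regularlyVarying_normalizedSurvival (hy : IsBackwardSolution ν 𝓛 y) :
    RegularlyVarying (normalizedSurvival ν y) 0 := by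
  rw [← add_neg_cancel (1 / ν)]
  exact (regularlyVarying_const_mul_rpow hν _).mul (hy.regularlyVarying_one_sub h𝓛pos h𝓛cont hν h𝓛)

theorem tendsto_normalizedSurvival_rpow_mul (hy : IsBackwardSolution ν 𝓛 y) :
    Tendsto (fun t => normalizedSurvival ν y t ^ ν *
      𝓛 ((ν * t) ^ (1 / ν) / normalizedSurvival ν y t)) atTop (nhds 1) := by
  have hlim := (hy.tendsto_mul_rpow_mul h𝓛pos h𝓛cont hν h𝓛).const_mul ν
  rw [mul_one_div_cancel hν.ne'] at hlim
  refine hlim.congr' ?_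
  filter_upwards [eventually_gt_atTop 0] with t ht
  have hνt : 0 < ν * t := mul_pos hν ht
  have hscale : 0 < (ν * t) ^ (1 / ν) := rpow_pos_of_pos hνt _
  rw [normalizedSurvival, mul_rpow hscale.le (hy.one_sub_pos ht.le).le, ← rpow_mul hνt.le,
    one_div_mul_cancel hν.ne', rpow_one, ← div_div, div_self hscale.ne', mul_assoc, mul_assoc]

theorem tendsto_mul_one_sub_div (hy : IsBackwardSolution ν 𝓛 y) (hz : IsBackwardSolution ν 𝓛 z)
    (hyz : y 0 ≤ z 0) :
    Tendsto (fun t => ν * t * (1 - (1 - z t) / (1 - y t))) atTop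
      (nhds (passageTime (reciprocalDrift ν 𝓛) (1 / (1 - y 0)) (1 / (1 - z 0)))) := by
  have hlim := (tendsto_mul_div_sub_one_of_tendsto_elasticity
    ((eventually_ge_atTop 0).mono fun _ => hy.one_sub_pos)
    ((eventually_ge_atTop 0).mono fun _ => hy.hasDerivAt_one_sub)
    (hy.tendsto_elasticity_one_sub h𝓛pos h𝓛cont hν h𝓛)
    (passageTime (reciprocalDrift ν 𝓛) (1 / (1 - y 0)) (1 / (1 - z 0)))).const_mul (-ν)
  rw [← mul_assoc, neg_mul_neg, mul_one_div_cancel hν.ne', one_mul] at hlim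
  refine hlim.congr' ?_
  filter_upwards [eventually_ge_atTop 0] with t ht
  rw [← one_sub_eq_one_sub_comp_add h𝓛pos h𝓛cont hy hz hyz ht]
  ring

end IsBackwardSolution

end BackwardKolmogorov

theorem stmt5_general
    (ν : ℝ) (hν0 : 0 < ν)
    (𝓛 : ℝ → ℝ)
    (h𝓛pos : ∀ x ∈ Ici (1 : ℝ), 0 < 𝓛 x)
    (h𝓛cont : ContinuousOn 𝓛 (Ici 1))
    (h𝓛sv : ∀ lam > (0 : ℝ), Tendsto (fun x => 𝓛 (lam * x) / 𝓛 x) atTop (nhds 1))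
    (F : ℝ → ℝ → ℝ)
    (hFmem : ∀ s ∈ Ico (0 : ℝ) 1, ∀ t : ℝ, 0 ≤ t → s ≤ F t s ∧ F t s < 1)
    (hF0 : ∀ s ∈ Ico (0 : ℝ) 1, F 0 s = s)
    (hFode : ∀ s ∈ Ico (0 : ℝ) 1, ∀ t : ℝ, 0 ≤ t →
      HasDerivAt (fun u => F u s)
        ((1 - F t s) ^ (1 + ν) * 𝓛 (1 / (1 - F t s))) t) :
    (∀ lam > (0 : ℝ),
      Tendsto (fun t => ((ν * (lam * t)) ^ (1 / ν) * (1 - F (lam * t) 0)) /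
        ((ν * t) ^ (1 / ν) * (1 - F t 0))) atTop (nhds 1)) ∧
    Tendsto (fun t => ((ν * t) ^ (1 / ν) * (1 - F t 0)) ^ ν *
      𝓛 ((ν * t) ^ (1 / ν) / ((ν * t) ^ (1 / ν) * (1 - F t 0)))) atTop (nhds 1) ∧
    (∀ t : ℝ, 0 < t → ν * t * (1 - (1 - F t 0) / (1 - F t 0)) = 0) ∧
    (∀ s ∈ Ico (0 : ℝ) 1,
      Tendsto (fun t => ν * t * (1 - (1 - F t s) / (1 - F t 0))) atTop
        (nhds (∫ x in (1 : ℝ)..(1 / (1 - s)), 1 / (x ^ (1 - ν) * 𝓛 x)))) := by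
  have h𝓛 : RegularlyVarying 𝓛 0 := regularlyVarying_zero_iff.2 h𝓛sv
  have hF (s : ℝ) (hs : s ∈ Ico 0 1) : IsBackwardSolution ν 𝓛 (fun t => F t s) :=
    ⟨fun t ht => hs.1.trans (hFmem s hs t ht).1, fun t ht => (hFmem s hs t ht).2, hFode s hs⟩
  have h0 : (0 : ℝ) ∈ Ico 0 1 := left_mem_Ico.2 one_pos
  have hF_zero := hF 0 h0
  refine ⟨?_, ?_, fun t ht => ?_, fun s hs => ?_⟩
  · exact regularlyVarying_zero_iff.1
      (hF_zero.regularlyVarying_normalizedSurvival h𝓛pos h𝓛cont hν0 h𝓛)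
  · exact hF_zero.tendsto_normalizedSurvival_rpow_mul h𝓛pos h𝓛cont hν0 h𝓛
  · rw [div_self (hF_zero.one_sub_pos ht.le).ne', sub_self, mul_zero]
  · have hinit : F 0 0 ≤ F 0 s := by simpa only [hF0 0 h0, hF0 s hs] using hs.1
    simpa only [hF0 0 h0, hF0 s hs, sub_zero, div_one] using!
      hF_zero.tendsto_mul_one_sub_div h𝓛pos h𝓛cont hν0 h𝓛 (hF s hs) hinit

theorem stmt5
    (ν : ℝ) (hν0 : 0 < ν) (hν1 : ν < 1)
    (𝓛 : ℝ → ℝ)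
    (h𝓛pos : ∀ x ∈ Ici (1:ℝ), 0 < 𝓛 x)
    (h𝓛cont : ContinuousOn 𝓛 (Ici 1))
    (h𝓛sv : ∀ lam > (0:ℝ), Tendsto (fun x => 𝓛 (lam * x) / 𝓛 x) atTop (nhds 1))
    (F : ℝ → ℝ → ℝ)
    (hFmem : ∀ s ∈ Ico (0:ℝ) 1, ∀ t : ℝ, 0 ≤ t → s ≤ F t s ∧ F t s < 1)
    (hF0 : ∀ s ∈ Ico (0:ℝ) 1, F 0 s = s)
    (hFode : ∀ s ∈ Ico (0:ℝ) 1, ∀ t : ℝ, 0 ≤ t →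
      HasDerivAt (fun u => F u s)
        ((1 - F t s) ^ (1 + ν) * 𝓛 (1 / (1 - F t s))) t)
 :
    (∀ lam > (0:ℝ),
      Tendsto (fun t => ((ν * (lam * t)) ^ (1 / ν) * (1 - F (lam * t) 0)) / ((ν * t) ^ (1 / ν) * (1 - F t 0))) atTop (nhds 1)) ∧
    Tendsto (fun t => ((ν * t) ^ (1 / ν) * (1 - F t 0)) ^ ν * 𝓛 ((ν * t) ^ (1 / ν) / ((ν * t) ^ (1 / ν) * (1 - F t 0)))) atTop (nhds 1) ∧
    (∀ t : ℝ, 0 < t → ν * t * (1 - (1 - F t 0) / (1 - F t 0)) = 0) ∧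
    (∀ s ∈ Ico (0:ℝ) 1,
      Tendsto (fun t => (ν * t * (1 - (1 - F t s) / (1 - F t 0)))) atTop
        (nhds (∫ x in (1:ℝ)..(1 / (1 - s)), 1 / (x ^ (1 - ν) * 𝓛 x)))) :=
  stmt5_general ν hν0 𝓛 h𝓛pos h𝓛cont h𝓛sv F hFmem hF0 hFode
end

section
/- Let σ>0. If L is slowly varying at infinity with remainder r, then the integral ∫_t^∞ y^{−(1+σ)}·L(y) dy converges for all large t and, as t→∞, ∫_t^∞ y^{−(1+σ)}·L(y) dy = (L(t)/σ)·t^{−σ}·(1+O(r(t))). -/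
open Real Filter Asymptotics Set MeasureTheory

/-!
The function `f = log ∘ L ∘ exp` turns dilations of `L` into translations, and a Steinhaus argument
upgrades the pointwise estimate `f (u + h) - f u = O(r (exp u))` to one that is uniform for `h` in
bounded intervals. Hence `|L y - L t| ≤ K * r t * L t` for `t ≤ y ≤ 2 * t`. As `r` decreases and
`L (2 * t) ≤ q * L t` with `q < 2 ^ τ`, adding this up over dyadic scales gives a convergent
geometric series relative to the weight `(y / t) ^ τ`, so that
`|L y - L t| ≤ C * r t * L t * (y / t) ^ τ` for all `y ≥ t`. Taking `τ < σ` and integrating this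
against `y ^ (-(1 + σ))` gives the expansion.
-/

open scoped Topology

section UniformBound

variable {α E F : Type*} [SeminormedAddCommGroup E] [SeminormedAddCommGroup F]

/-- The points of `S` at which the estimate `φ m v = O(w m)` as `m → ∞` is witnessed by `n`, which
serves both as the constant and as the index from which the estimate holds. -/
def isBigOLevelSet (S : Set α) (φ : ℕ → α → E) (w : ℕ → F) (n : ℕ) : Set α :=
  {v ∈ S | ∀ m ≥ n, ‖φ m v‖ ≤ n * ‖w m‖}

lemma monotone_isBigOLevelSet (S : Set α) (φ : ℕ → α → E) (w : ℕ → F) :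
    Monotone (isBigOLevelSet S φ w) := by
  rintro n k hnk v ⟨hvS, hv⟩
  refine ⟨hvS, fun m hm => (hv m (hnk.trans hm)).trans ?_⟩
  gcongr

lemma iUnion_isBigOLevelSet {S : Set α} {φ : ℕ → α → E} {w : ℕ → F}
    (h : ∀ v ∈ S, (fun m => φ m v) =O[atTop] w) : ⋃ n, isBigOLevelSet S φ w n = S := by
  refine (iUnion_subset fun n v hv => hv.1).antisymm fun v hv => ?_
  obtain ⟨C, hC⟩ := (h v hv).bound
  obtain ⟨N, hN⟩ := eventually_atTop.1 hC
  obtain ⟨M, hM⟩ := exists_nat_ge C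
  refine mem_iUnion.2 ⟨max N M, hv, fun m hm => (hN m ((le_max_left N M).trans hm)).trans ?_⟩
  have hCmax : C ≤ (max N M : ℕ) := hM.trans (by exact_mod_cast le_max_right N M)
  gcongr

lemma tendsto_measure_isBigOLevelSet [MeasurableSpace α] (μ : Measure α) {S : Set α}
    {φ : ℕ → α → E} {w : ℕ → F} (h : ∀ v ∈ S, (fun m => φ m v) =O[atTop] w) :
    Tendsto (fun n => μ (isBigOLevelSet S φ w n)) atTop (𝓝 (μ S)) := by
  simpa only [iUnion_isBigOLevelSet h, Function.comp_def] using
    tendsto_measure_iUnion_atTop (μ := μ) (monotone_isBigOLevelSet S φ w)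

lemma measurableSet_isBigOLevelSet [MeasurableSpace α] {S : Set α} (hS : MeasurableSet S)
    {φ : ℕ → α → E} (hφ : ∀ m, Measurable fun v => ‖φ m v‖) (w : ℕ → F) (n : ℕ) :
    MeasurableSet (isBigOLevelSet S φ w n) := by
  have hinter : isBigOLevelSet S φ w n = S ∩ ⋂ m ≥ n, {v | ‖φ m v‖ ≤ n * ‖w m‖} := by
    ext v
    simp [isBigOLevelSet]
  rw [hinter]
  exact hS.inter <| .iInter fun m => .iInter fun _ => measurableSet_le (hφ m) measurable_const

lemma exists_mem_sub_mem_of_lt_volume_add {V W : Set ℝ} {a d : ℝ} (hW : MeasurableSet W)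
    (hVa : V ⊆ Icc 0 a) (hWa : W ⊆ Icc 0 a) (hd : 0 ≤ d)
    (hvol : ENNReal.ofReal (a + d) < volume V + volume W) : ∃ v ∈ V, v - d ∈ W := by
  have hVu : V ⊆ Icc 0 (a + d) := hVa.trans (Icc_subset_Icc_right (by linarith))
  have hWu : (· - d) ⁻¹' W ⊆ Icc 0 (a + d) := fun v hv => by
    obtain ⟨hv0, hva⟩ := hWa hv
    constructor <;> linarith
  have hWvol : volume ((· - d) ⁻¹' W) = volume W := by
    simpa only [sub_eq_add_neg] using measure_preimage_add_right volume (-d) W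
  have hlt : volume (Icc 0 (a + d)) < volume V + volume ((· - d) ⁻¹' W) := by
    rwa [hWvol, Real.volume_Icc, sub_zero]
  exact nonempty_inter_of_measure_lt_add volume (hW.preimage (measurable_sub_const d)) hVu hWu hlt

variable [MeasurableSpace E] [OpensMeasurableSpace E]

-- The level sets along `s` and `t` each have measure close to `H + 1`; placed `t m - s m ≤ H`
-- apart they fit in an interval of length `2 * H + 1`, so they overlap.
lemma exists_forall_exists_norm_sub_le {f : ℝ → E} {g : ℝ → F} {H : ℝ} (hf : Measurable f)
    (hfg : ∀ h ≥ 0, (fun u => f (u + h) - f u) =O[atTop] g) {s t : ℕ → ℝ}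
    (hs : Tendsto s atTop atTop) (hst : ∀ m, t m ∈ Icc (s m) (s m + H)) :
    ∃ n : ℕ, ∀ m ≥ n, ∃ z, ‖f z - f (s m)‖ ≤ n * ‖g (s m)‖ ∧ ‖f z - f (t m)‖ ≤ n * ‖g (t m)‖ := by
  have hH : 0 ≤ H := by linarith [(hst 0).1, (hst 0).2]
  have ht : Tendsto t atTop atTop := tendsto_atTop_mono (fun m => (hst m).1) hs
  let V (p : ℕ → ℝ) : ℕ → Set ℝ :=
    isBigOLevelSet (Icc 0 (H + 1)) (fun m v => f (p m + v) - f (p m)) (fun m => g (p m))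
  have hV {p : ℕ → ℝ} (hp : Tendsto p atTop atTop) :
      Tendsto (fun n => volume (V p n)) atTop (𝓝 (ENNReal.ofReal (H + 1))) := by
    rw [← sub_zero (H + 1), ← Real.volume_Icc]
    exact tendsto_measure_isBigOLevelSet volume fun v hv => (hfg v hv.1).comp_tendsto hp
  have hVmeas (n : ℕ) : MeasurableSet (V t n) :=
    measurableSet_isBigOLevelSet measurableSet_Icc
      (fun m => (continuous_id.sub continuous_const).norm.measurable.comp (by fun_prop)) _ n
  have hlt : ENNReal.ofReal (H + 1 + H) < ENNReal.ofReal (H + 1) + ENNReal.ofReal (H + 1) := by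
    rw [← ENNReal.ofReal_add (by positivity) (by positivity),
      ENNReal.ofReal_lt_ofReal_iff (by positivity)]
    linarith
  obtain ⟨n, hn⟩ := (((hV hs).add (hV ht)).eventually (lt_mem_nhds hlt)).exists
  refine ⟨n, fun m hm => ?_⟩
  obtain ⟨v, hvs, hvt⟩ := exists_mem_sub_mem_of_lt_volume_add (d := t m - s m) (hVmeas n)
    (fun v hv => hv.1) (fun v hv => hv.1) (sub_nonneg.2 (hst m).1)
    ((ENNReal.ofReal_le_ofReal (by linarith [(hst m).2])).trans_lt hn)
  refine ⟨s m + v, hvs.2 m hm, ?_⟩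
  rw [show s m + v = t m + (v - (t m - s m)) by ring]
  exact hvt.2 m hm

theorem isBigO_add_sub_atTop_prod_Icc {f : ℝ → E} {g : ℝ → ℝ} {a : ℝ} (hf : Measurable f)
    (hg : AntitoneOn g (Ici a)) (hg0 : ∀ u ∈ Ici a, 0 ≤ g u)
    (hfg : ∀ h ≥ 0, (fun u => f (u + h) - f u) =O[atTop] g) (H : ℝ) :
    (fun p : ℝ × ℝ => f (p.1 + p.2) - f p.1) =O[atTop ×ˢ 𝓟 (Icc 0 H)] fun p => g p.1 := by
  by_contra hnot
  have hbad (n : ℕ) : ∃ s ≥ max a n, ∃ t ∈ Icc s (s + H), n * g s < ‖f t - f s‖ := by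
    by_contra! hn
    refine hnot (.of_bound n (eventually_prod_principal_iff.2 ?_))
    filter_upwards [eventually_ge_atTop (max a n)] with s hs h hh
    rw [norm_of_nonneg (hg0 s ((le_max_left a n).trans hs))]
    exact hn s hs (s + h) ⟨by linarith [hh.1], by linarith [hh.2]⟩
  choose s hs t hst hlt using hbad
  have hs_top : Tendsto s atTop atTop :=
    tendsto_atTop_mono (fun n => (le_max_right a n).trans (hs n)) tendsto_natCast_atTop_atTop
  obtain ⟨n, hn⟩ := exists_forall_exists_norm_sub_le hf hfg hs_top hst
  obtain ⟨z, hzs, hzt⟩ := hn (2 * n) (by omega)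
  have hsa : s (2 * n) ∈ Ici a := (le_max_left a _).trans (hs _)
  have hta : t (2 * n) ∈ Ici a := le_trans hsa (hst _).1
  rw [norm_of_nonneg (hg0 _ hsa)] at hzs
  rw [norm_of_nonneg (hg0 _ hta)] at hzt
  refine (hlt (2 * n)).not_ge ?_
  calc ‖f (t (2 * n)) - f (s (2 * n))‖
      ≤ ‖f z - f (t (2 * n))‖ + ‖f z - f (s (2 * n))‖ := by
        rw [norm_sub_rev (f z)]; exact norm_sub_le_norm_sub_add_norm_sub _ _ _
    _ ≤ n * g (s (2 * n)) + n * g (s (2 * n)) := by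
        gcongr
        exact hzt.trans (by gcongr; exact hg hsa hta (hst _).1)
    _ = (2 * n : ℕ) * g (s (2 * n)) := by push_cast; ring

end UniformBound

section SlowVariation

variable {α : Type*} {l : Filter α}

lemma isBigO_exp_sub_one {f : α → ℝ} (hf : IsBoundedUnder (· ≤ ·) l fun a => |f a|) :
    (fun a => exp (f a) - 1) =O[l] f := by
  obtain ⟨M, hM⟩ := hf
  refine .of_bound (exp M) ((eventually_map.1 hM).mono fun a ha => ?_)
  have hM0 : 0 ≤ M := (abs_nonneg _).trans ha
  have hLip : ‖exp (f a) - exp 0‖ ≤ exp M * ‖f a - 0‖ :=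
    (convex_Icc (-M) M).norm_image_sub_le_of_norm_deriv_le (fun x _ => differentiableAt_exp)
      (fun x hx => by simpa using hx.2) ⟨by linarith, hM0⟩ (abs_le.1 ha)
  simpa using hLip

lemma isBigO_log_sub_one {f : α → ℝ} (hf : Tendsto f l (𝓝 1)) :
    (fun a => log (f a)) =O[l] fun a => f a - 1 := by
  simpa [Function.comp_def] using
    (hasDerivAt_log one_ne_zero).isBigO_sub.comp_tendsto hf

variable {L r : ℝ → ℝ} {c : ℝ}

lemma isBigO_log_comp_exp_add_sub (hL : ∀ᶠ x in atTop, 0 < L x)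
    (hLsv : ∀ lam ≥ 1, Tendsto (fun x => L (lam * x) / L x) atTop (𝓝 1))
    (hLrem : ∀ lam ≥ 1, (fun x => L (lam * x) / L x - 1) =O[atTop] r) {h : ℝ} (hh : 0 ≤ h) :
    (fun u => log (L (exp (u + h))) - log (L (exp u))) =O[atTop] fun u => r (exp u) := by
  have hlog := ((isBigO_log_sub_one (hLsv _ (one_le_exp hh))).trans
    (hLrem _ (one_le_exp hh))).comp_tendsto tendsto_exp_atTop
  have hL_exp : ∀ᶠ u in atTop, 0 < L (exp u) := tendsto_exp_atTop.eventually hL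
  refine hlog.congr' ?_ .rfl
  filter_upwards [hL_exp, (tendsto_atTop_add_const_right _ h tendsto_id).eventually hL_exp]
    with u hu huh
  rw [id] at huh
  rw [← log_div huh.ne' hu.ne', add_comm, exp_add, Function.comp_apply]

theorem isBigO_div_sub_one_atTop_prod_Icc (hL_meas : Measurable L) (hL : ∀ᶠ x in atTop, 0 < L x)
    (hr : AntitoneOn r (Ici c)) (hr0 : ∀ x ∈ Ici c, 0 ≤ r x)
    (hLsv : ∀ lam ≥ 1, Tendsto (fun x => L (lam * x) / L x) atTop (𝓝 1))
    (hLrem : ∀ lam ≥ 1, (fun x => L (lam * x) / L x - 1) =O[atTop] r) (b : ℝ) :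
    (fun p : ℝ × ℝ => L (p.2 * p.1) / L p.1 - 1) =O[atTop ×ˢ 𝓟 (Icc 1 b)] fun p => r p.1 := by
  have hexp : MapsTo exp (Ici c) (Ici c) := fun u (hu : c ≤ u) =>
    hu.trans (by linarith [add_one_le_exp u])
  have hunif := isBigO_add_sub_atTop_prod_Icc (f := fun u => log (L (exp u)))
    (g := fun u => r (exp u)) (by fun_prop) (hr.comp_MonotoneOn (exp_monotone.monotoneOn _) hexp)
    (fun u hu => hr0 _ (hexp hu)) (fun h hh => isBigO_log_comp_exp_add_sub hL hLsv hLrem hh) (log b)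
  have hlog : Tendsto (Prod.map log log) (atTop ×ˢ 𝓟 (Icc 1 b))
      (atTop ×ˢ 𝓟 (Icc 0 (log b))) := by
    refine tendsto_log_atTop.prodMap (tendsto_principal_principal.2 fun x hx => ?_)
    exact ⟨log_nonneg hx.1, log_le_log (by linarith [hx.1]) hx.2⟩
  have hpos : ∀ᶠ p in atTop ×ˢ 𝓟 (Icc 1 b), 0 < p.1 ∧ 0 < p.2 ∧ 0 < L p.1 ∧ 0 < L (p.2 * p.1) := by
    rw [eventually_prod_principal_iff]
    filter_upwards [eventually_gt_atTop 0, eventually_forall_ge_atTop.2 hL] with x hx hLx lam hlam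
    exact ⟨hx, by linarith [hlam.1], hLx x le_rfl, hLx _ (le_mul_of_one_le_left hx.le hlam.1)⟩
  have hlog_ratio : (fun p : ℝ × ℝ => log (L (p.2 * p.1) / L p.1))
      =O[atTop ×ˢ 𝓟 (Icc 1 b)] fun p => r p.1 := by
    refine (hunif.comp_tendsto hlog).congr' ?_ ?_
    · filter_upwards [hpos] with p ⟨hp1, hp2, hLp, hLp'⟩
      simp only [Function.comp_apply, Prod.map_fst, Prod.map_snd, exp_add, exp_log hp1, exp_log hp2]
      rw [mul_comm, log_div hLp'.ne' hLp.ne']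
    · filter_upwards [hpos] with p ⟨hp1, _⟩
      simp only [Function.comp_apply, Prod.map_fst, exp_log hp1]
  have hr_bdd : (fun p : ℝ × ℝ => r p.1) =O[atTop ×ˢ 𝓟 (Icc 1 b)] fun _ => (1 : ℝ) := by
    refine .of_bound (r c) (eventually_prod_principal_iff.2 ?_)
    filter_upwards [eventually_ge_atTop c] with x hx lam _
    simpa [abs_of_nonneg (hr0 x hx)] using hr self_mem_Ici hx hx
  have hbdd := (hlog_ratio.trans hr_bdd).isBoundedUnder_le
  refine ((isBigO_exp_sub_one hbdd).trans hlog_ratio).congr' ?_ .rfl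
  filter_upwards [hpos] with p ⟨_, _, hLp, hLp'⟩
  rw [exp_log (div_pos hLp' hLp)]

lemma abs_sub_le_mul_div_rpow_of_doubling {T K q τ : ℝ} (hT : 0 < T) (hK : 0 ≤ K) (hq : 0 ≤ q)
    (hτ : 0 ≤ τ) (hqτ : q < 2 ^ τ) (hL : ∀ x ∈ Ici T, 0 ≤ L x) (hr : AntitoneOn r (Ici T))
    (hr0 : ∀ x ∈ Ici T, 0 ≤ r x)
    (hloc : ∀ t ≥ T, ∀ y ∈ Icc t (2 * t), |L y - L t| ≤ K * r t * L t)
    (hdbl : ∀ t ≥ T, L (2 * t) ≤ q * L t) {t y : ℝ} (ht : T ≤ t) (hty : t ≤ y) :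
    |L y - L t| ≤ K / (1 - q / 2 ^ τ) * r t * L t * (y / t) ^ τ := by
  set C := K / (1 - q / 2 ^ τ)
  have hden : 0 < 1 - q / 2 ^ τ := sub_pos.2 ((div_lt_one (by positivity)).2 hqτ)
  have hC : C * (q / 2 ^ τ) + K = C := by linarith [div_mul_cancel₀ K hden.ne']
  obtain ⟨n, hn⟩ : ∃ n : ℕ, y ≤ 2 ^ n * t := by
    obtain ⟨n, hn⟩ := pow_unbounded_of_one_lt (y / t) one_lt_two
    exact ⟨n, ((div_lt_iff₀ (hT.trans_le ht)).1 hn).le⟩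
  induction n generalizing t with
  | zero =>
    obtain rfl : t = y := by linarith
    have hLt := hL t ht
    have hrt := hr0 t ht
    have ht0 := hT.trans_le ht
    simp only [sub_self, abs_zero]
    positivity
  | succ n ih =>
    have hLt := hL t ht
    have hrt := hr0 t ht
    have ht0 := hT.trans_le ht
    have hy0 : 0 ≤ y := ht0.le.trans hty
    have hratio : 1 ≤ (y / t) ^ τ := one_le_rpow ((one_le_div ht0).2 hty) hτ
    have hstep {x : ℝ} (hx : x ∈ Icc t (2 * t)) : |L x - L t| ≤ K * r t * L t * (y / t) ^ τ :=
      (hloc t ht x hx).trans (le_mul_of_one_le_right (by positivity) hratio)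
    rcases le_total y (2 * t) with hy | hy
    · have hKC : K ≤ C := by linarith [show 0 ≤ C * (q / 2 ^ τ) by positivity]
      exact (hstep ⟨hty, hy⟩).trans (by gcongr)
    have htt : t ≤ 2 * t := by linarith
    have hfar : |L y - L (2 * t)| ≤ C * r t * (q * L t) * ((y / t) ^ τ / 2 ^ τ) := by
      rw [← div_rpow (by positivity) zero_le_two, div_div, mul_comm t]
      refine (ih (ht.trans htt) hy (by rwa [← mul_assoc, ← pow_succ])).trans ?_
      have hL2 := hL _ (ht.trans htt)
      gcongr
      · exact hr ht (ht.trans htt) htt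
      · exact hdbl t ht
    calc |L y - L t| ≤ |L y - L (2 * t)| + |L (2 * t) - L t| := abs_sub_le _ _ _
      _ ≤ C * r t * (q * L t) * ((y / t) ^ τ / 2 ^ τ) + K * r t * L t * (y / t) ^ τ :=
        add_le_add hfar (hstep (right_mem_Icc.2 htt))
      _ = (C * (q / 2 ^ τ) + K) * r t * L t * (y / t) ^ τ := by ring
      _ = C * r t * L t * (y / t) ^ τ := by rw [hC]

theorem exists_eventually_abs_sub_le_mul_div_rpow (hL_meas : Measurable L)
    (hL : ∀ᶠ x in atTop, 0 < L x) (hr : AntitoneOn r (Ici c)) (hr0 : ∀ x ∈ Ici c, 0 ≤ r x)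
    (hLsv : ∀ lam ≥ 1, Tendsto (fun x => L (lam * x) / L x) atTop (𝓝 1))
    (hLrem : ∀ lam ≥ 1, (fun x => L (lam * x) / L x - 1) =O[atTop] r) {τ : ℝ} (hτ : 0 < τ) :
    ∃ C, ∀ᶠ t in atTop, ∀ y ≥ t, |L y - L t| ≤ C * r t * L t * (y / t) ^ τ := by
  obtain ⟨q, hq1, hqτ⟩ : ∃ q : ℝ, 1 < q ∧ q < 2 ^ τ := exists_between (one_lt_rpow one_lt_two hτ)
  obtain ⟨K, hK, hunif⟩ :=
    (isBigO_div_sub_one_atTop_prod_Icc hL_meas hL hr hr0 hLsv hLrem 2).exists_nonneg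
  obtain ⟨T, hT⟩ := eventually_atTop.1 <| hL.and <|
    (eventually_prod_principal_iff.1 hunif.bound).and <|
    (hLsv 2 one_le_two).eventually_lt_const hq1
  refine ⟨K / (1 - q / 2 ^ τ), ?_⟩
  filter_upwards [eventually_ge_atTop (max T (max c 1))] with t ht y hty
  have hLpos {x : ℝ} (hx : max T (max c 1) ≤ x) : 0 < L x := (hT x (le_of_max_le_left hx)).1
  have hc : Ici (max T (max c 1)) ⊆ Ici c := Ici_subset_Ici.2 (by simp)
  refine abs_sub_le_mul_div_rpow_of_doubling (by simp) hK (by positivity) hτ.le hqτ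
    (fun x hx => (hLpos hx).le) (hr.mono hc) (fun x hx => hr0 x (hc hx)) ?_ ?_ ht hty
  · intro t ht y hy
    have ht0 : 0 < t := by linarith [le_of_max_le_right (le_of_max_le_right ht)]
    have hyt := (hT t (le_of_max_le_left ht)).2.1 (y / t)
      ⟨(one_le_div ht0).2 hy.1, (div_le_iff₀ ht0).2 hy.2⟩
    rwa [div_mul_cancel₀ _ ht0.ne', div_sub_one (hLpos ht).ne', norm_div, Real.norm_eq_abs,
      norm_of_nonneg (hr0 t (hc ht)), norm_of_nonneg (hLpos ht).le, div_le_iff₀ (hLpos ht)] at hyt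
  · intro t ht
    exact ((div_lt_iff₀ (hLpos ht)).1 (hT t (le_of_max_le_left ht)).2.2).le

end SlowVariation

section Integral

variable {σ τ t : ℝ}

lemma integrableOn_Ioi_rpow_neg_one_add (hσ : 0 < σ) (ht : 0 < t) :
    IntegrableOn (fun y : ℝ => y ^ (-(1 + σ))) (Ioi t) :=
  integrableOn_Ioi_rpow_of_lt (by linarith) ht

lemma integral_Ioi_rpow_neg_one_add (hσ : 0 < σ) (ht : 0 < t) :
    ∫ y in Ioi t, y ^ (-(1 + σ)) = t ^ (-σ) / σ := by
  rw [integral_Ioi_rpow_of_lt (by linarith) ht, show -(1 + σ) + 1 = -σ by ring, neg_div_neg_eq]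

variable {f : ℝ → ℝ} {A B : ℝ}

lemma norm_rpow_mul_sub_le (ht : 0 < t) (hf : ∀ y ∈ Ioi t, |f y - A| ≤ B * (y / t) ^ τ) {y : ℝ}
    (hy : y ∈ Ioi t) :
    ‖y ^ (-(1 + σ)) * (f y - A)‖ ≤ B * t ^ (-τ) * y ^ (-(1 + (σ - τ))) := by
  have hy0 : 0 < y := ht.trans hy
  calc ‖y ^ (-(1 + σ)) * (f y - A)‖ = y ^ (-(1 + σ)) * |f y - A| := by
        rw [norm_mul, norm_of_nonneg (by positivity), Real.norm_eq_abs]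
    _ ≤ y ^ (-(1 + σ)) * (B * (y / t) ^ τ) := by gcongr; exact hf y hy
    _ = B * t ^ (-τ) * (y ^ (-(1 + σ)) * y ^ τ) := by
        rw [div_rpow hy0.le ht.le, rpow_neg ht.le]; ring
    _ = B * t ^ (-τ) * y ^ (-(1 + (σ - τ))) := by
        rw [← rpow_add hy0, show -(1 + σ) + τ = -(1 + (σ - τ)) by ring]

lemma integrableOn_Ioi_rpow_mul_sub (hτσ : τ < σ) (ht : 0 < t) (hfm : Measurable f)
    (hf : ∀ y ∈ Ioi t, |f y - A| ≤ B * (y / t) ^ τ) :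
    IntegrableOn (fun y => y ^ (-(1 + σ)) * (f y - A)) (Ioi t) :=
  ((integrableOn_Ioi_rpow_neg_one_add (sub_pos.2 hτσ) ht).const_mul _).mono' (by fun_prop)
    (ae_restrict_of_forall_mem measurableSet_Ioi fun _ => norm_rpow_mul_sub_le ht hf)

lemma integrableOn_Ioi_rpow_mul (hσ : 0 < σ) (hτσ : τ < σ) (ht : 0 < t) (hfm : Measurable f)
    (hf : ∀ y ∈ Ioi t, |f y - A| ≤ B * (y / t) ^ τ) :
    IntegrableOn (fun y => y ^ (-(1 + σ)) * f y) (Ioi t) := by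
  refine ((integrableOn_Ioi_rpow_mul_sub hτσ ht hfm hf).add
    ((integrableOn_Ioi_rpow_neg_one_add hσ ht).mul_const A)).congr_fun (fun y _ => ?_)
    measurableSet_Ioi
  simp only [Pi.add_apply]
  ring

lemma norm_integral_Ioi_rpow_mul_sub_le (hσ : 0 < σ) (hτσ : τ < σ) (ht : 0 < t) (hfm : Measurable f)
    (hf : ∀ y ∈ Ioi t, |f y - A| ≤ B * (y / t) ^ τ) :
    ‖(∫ y in Ioi t, y ^ (-(1 + σ)) * f y) - A / σ * t ^ (-σ)‖ ≤ B / (σ - τ) * t ^ (-σ) := by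
  have hmain : ∫ y in Ioi t, y ^ (-(1 + σ)) * A = A / σ * t ^ (-σ) := by
    rw [integral_mul_const, integral_Ioi_rpow_neg_one_add hσ ht]; ring
  calc ‖(∫ y in Ioi t, y ^ (-(1 + σ)) * f y) - A / σ * t ^ (-σ)‖
      = ‖∫ y in Ioi t, y ^ (-(1 + σ)) * (f y - A)‖ := by
        rw [← hmain, ← integral_sub (integrableOn_Ioi_rpow_mul hσ hτσ ht hfm hf)
          ((integrableOn_Ioi_rpow_neg_one_add hσ ht).mul_const A)]
        simp only [mul_sub]
    _ ≤ ∫ y in Ioi t, B * t ^ (-τ) * y ^ (-(1 + (σ - τ))) :=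
        norm_integral_le_of_norm_le
          ((integrableOn_Ioi_rpow_neg_one_add (sub_pos.2 hτσ) ht).const_mul _)
          (ae_restrict_of_forall_mem measurableSet_Ioi fun _ => norm_rpow_mul_sub_le ht hf)
    _ = B / (σ - τ) * (t ^ (-τ) * t ^ (-(σ - τ))) := by
        rw [integral_const_mul, integral_Ioi_rpow_neg_one_add (sub_pos.2 hτσ) ht]; ring
    _ = B / (σ - τ) * t ^ (-σ) := by rw [← rpow_add ht, show -τ + -(σ - τ) = -σ by ring]

end Integral

lemma exists_isBigO_eventually_eq_mul_one_add {α 𝕜 : Type*} [NormedField 𝕜] {l : Filter α}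
    {f g r : α → 𝕜} (hg : ∀ᶠ a in l, g a ≠ 0)
    (hfg : (fun a => f a - g a) =O[l] fun a => r a * g a) :
    ∃ E : α → 𝕜, E =O[l] r ∧ ∀ᶠ a in l, f a = g a * (1 + E a) := by
  refine ⟨fun a => (f a - g a) * (g a)⁻¹, ?_, ?_⟩
  · refine (hfg.mul (isBigO_refl (fun a => (g a)⁻¹) l)).congr' .rfl ?_
    filter_upwards [hg] with a ha using mul_inv_cancel_right₀ ha _
  · filter_upwards [hg] with a ha
    rw [mul_one_add, mul_comm _ (g a)⁻¹, mul_inv_cancel_left₀ ha, add_sub_cancel]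

theorem stmt8_general {σ c : ℝ} (hσ : 0 < σ) {L r : ℝ → ℝ} (hL_meas : Measurable L)
    (hL : ∀ᶠ x in atTop, 0 < L x) (hr : AntitoneOn r (Ici c)) (hr0 : ∀ x ∈ Ici c, 0 ≤ r x)
    (hLsv : ∀ lam ≥ 1, Tendsto (fun x => L (lam * x) / L x) atTop (𝓝 1))
    (hLrem : ∀ lam ≥ 1, (fun x => L (lam * x) / L x - 1) =O[atTop] r) :
    (∀ᶠ t in atTop, IntegrableOn (fun y => y ^ (-(1 + σ)) * L y) (Ioi t)) ∧
    ∃ E : ℝ → ℝ, E =O[atTop] r ∧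
      ∀ᶠ t in atTop, ∫ y in Ioi t, y ^ (-(1 + σ)) * L y = L t / σ * t ^ (-σ) * (1 + E t) := by
  obtain ⟨C, hC⟩ := exists_eventually_abs_sub_le_mul_div_rpow hL_meas hL hr hr0 hLsv hLrem
    (half_pos hσ)
  have hosc : ∀ᶠ t in atTop, ∀ y ∈ Ioi t, |L y - L t| ≤ C * r t * L t * (y / t) ^ (σ / 2) :=
    hC.mono fun t ht y hy => ht y (le_of_lt hy)
  refine ⟨?_, exists_isBigO_eventually_eq_mul_one_add ?_ (.of_bound (2 * C) ?_)⟩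
  · filter_upwards [hosc, eventually_gt_atTop 0] with t hbound ht
    exact integrableOn_Ioi_rpow_mul hσ (half_lt_self hσ) ht hL_meas hbound
  · filter_upwards [hL, eventually_gt_atTop 0] with t hLt ht
    positivity
  · filter_upwards [hosc, hL, eventually_gt_atTop 0, eventually_ge_atTop c] with t hbound hLt ht htc
    refine (norm_integral_Ioi_rpow_mul_sub_le hσ (half_lt_self hσ) ht hL_meas hbound).trans_eq ?_
    have hrt := hr0 t htc
    rw [norm_of_nonneg (by positivity)]
    field_simp
    ring

theorem stmt8
    (σ c : ℝ) (hσ : 0 < σ) (hc : 0 < c)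
    (L r : ℝ → ℝ)
    (hLmeas : Measurable L)
    (hLpos : ∀ x ∈ Ici c, 0 < L x)
    (hLloc : LocallyIntegrableOn L (Ici c))
    (hrpos : ∀ x ∈ Ici c, 0 < r x)
    (hrdec : AntitoneOn r (Ici c))
    (hr0 : Tendsto r atTop (nhds 0))
    (hLsv : ∀ lam > (0:ℝ), Tendsto (fun x => L (lam * x) / L x) atTop (nhds 1))
    (hLrem : ∀ lam > (0:ℝ), (fun x => L (lam * x) / L x - 1) =O[atTop] r)
 :
    (∀ᶠ t in atTop, IntegrableOn (fun y => y ^ (-(1 + σ)) * L y) (Ioi t)) ∧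
    ∃ E : ℝ → ℝ, E =O[atTop] r ∧
      ∀ᶠ t in atTop,
        ∫ y in Ioi t, y ^ (-(1 + σ)) * L y =
          L t / σ * t ^ (-σ) * (1 + E t) :=
  stmt8_general hσ hLmeas ((eventually_ge_atTop c).mono hLpos) hrdec (fun x hx => (hrpos x hx).le)
    (fun lam hlam => hLsv lam (by linarith)) (fun lam hlam => hLrem lam (by linarith))
end

section
/- Assume γ>0 and define w(s)=exp(−∫_s^1 (1−x)^{γ−1}·L(1/(1−x)) dx) for s∈[0,1) (the integral converges since γ>0). Then w satisfies the Schröder-type functional equation w(F(τ;s)) = w(s)/P(τ;s) for every τ≥0 and s∈[0,1). -/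
open Real Filter Asymptotics Set MeasureTheory

/-!
With `f(s) = (1 - s) ^ (1 + ν) * 𝓛 (1 / (1 - s))` and `g(s) = -(1 - s) ^ δ * ℓ (1 / (1 - s))`, the
integrand in the exponent of `w` is `-g / f`. As `∂F/∂t = f(F)`, the substitution `x = F(u; s)`
turns `log P(τ; s) = ∫₀^τ g(F(u; s)) du` into the integral of `g / f` from `s` to `F(τ; s)`, which
is `log w(s) - log w(F(τ; s))`. The integral in `w` converges at `1` because a slowly varying
function grows slower than any positive power, so that the integrand is `O((1 - x) ^ (γ / 2 - 1))`.
-/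

/-- Slow variation at infinity in the sense of Karamata. No sign condition is imposed; as
`x / 0 = 0`, the limits force `L` to be nonzero near infinity. -/
def IsSlowlyVarying (L : ℝ → ℝ) : Prop :=
  ∀ c > (0 : ℝ), Tendsto (fun x => L (c * x) / L x) atTop (nhds 1)

theorem forall_le_of_mul_le {α β : Type*} [Field α] [LinearOrder α] [IsStrictOrderedRing α]
    [Archimedean α] [Preorder β] {ψ : α → β} {a q X : α} {M : β}
    (hq : 1 < q) (hX : 0 < X) (haX : a ≤ X)
    (hM : ∀ x ∈ Icc a (q * X), ψ x ≤ M) (hψ : ∀ x ≥ X, ψ (q * x) ≤ ψ x) :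
    ∀ x ≥ a, ψ x ≤ M := by
  have hq0 : 0 < q := one_pos.trans hq
  have le_of_le_pow (n : ℕ) : ∀ x ≥ a, x ≤ q ^ n * (q * X) → ψ x ≤ M := by
    induction n with
    | zero => exact fun x hax hx => hM x ⟨hax, by simpa using hx⟩
    | succ n ih =>
      intro x hax hx
      rcases le_or_gt x (q * X) with hxX | hxX
      · exact hM x ⟨hax, hxX⟩
      · have hX_le : X ≤ x / q := ((lt_div_iff₀' hq0).2 hxX).le
        have hle : x / q ≤ q ^ n * (q * X) := (div_le_iff₀' hq0).2 (hx.trans_eq (by ring))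
        calc ψ x = ψ (q * (x / q)) := by rw [mul_div_cancel₀ x hq0.ne']
          _ ≤ ψ (x / q) := hψ _ hX_le
          _ ≤ M := ih _ (haX.trans hX_le) hle
  intro x hax
  obtain ⟨n, hn⟩ := pow_unbounded_of_one_lt (x / (q * X)) hq
  exact le_of_le_pow n x hax ((div_le_iff₀ (mul_pos hq0 hX)).1 hn.le)

namespace IsSlowlyVarying

variable {L : ℝ → ℝ} {γ : ℝ}

theorem div {L₁ L₂ : ℝ → ℝ} (h₁ : IsSlowlyVarying L₁) (h₂ : IsSlowlyVarying L₂) :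
    IsSlowlyVarying (fun x => L₁ x / L₂ x) := by
  intro c hc
  simpa only [Pi.div_def, div_div_div_comm, div_one] using (h₁ c hc).div (h₂ c hc) one_ne_zero

theorem eventually_abs_comp_mul_le (hL : IsSlowlyVarying L) {c K : ℝ} (hc : 0 < c) (hK : 1 < K) :
    ∀ᶠ x in atTop, |L (c * x)| ≤ K * |L x| := by
  have habs : ∀ᶠ x in atTop, |L (c * x) / L x| < K :=
    (hL c hc).abs.eventually_lt_const (by rwa [abs_one])
  filter_upwards [habs, (hL c hc).eventually_ne one_ne_zero] with x hlt hne
  have hLx : 0 < |L x| := abs_pos.2 (div_ne_zero_iff.1 hne).2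
  rw [abs_div, div_lt_iff₀ hLx] at hlt
  exact hlt.le

theorem exists_abs_le_mul_rpow (hL : IsSlowlyVarying L) {a : ℝ} (ha : 0 < a)
    (hc : ContinuousOn L (Ici a)) (hγ : 0 < γ) :
    ∃ M, ∀ x ≥ a, |L x| ≤ M * x ^ γ := by
  obtain ⟨X, hX⟩ := ((hL.eventually_abs_comp_mul_le two_pos (one_lt_rpow one_lt_two hγ)).and
    (eventually_ge_atTop a)).exists_forall_of_atTop
  have haX : a ≤ X := (hX X le_rfl).2
  have hX0 : 0 < X := ha.trans_le haX
  have hcψ : ContinuousOn (fun x => |L x| / x ^ γ) (Ici a) :=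
    hc.abs.div (continuousOn_id.rpow_const fun x hx => .inl (ha.trans_le hx).ne')
      fun x hx => (rpow_pos_of_pos (ha.trans_le hx) γ).ne'
  obtain ⟨M, hM⟩ := isCompact_Icc.bddAbove_image
    (hcψ.mono (Icc_subset_Ici_self : Icc a (2 * X) ⊆ Ici a))
  have hψ : ∀ x ≥ X, |L (2 * x)| / (2 * x) ^ γ ≤ |L x| / x ^ γ := by
    intro x hx
    have hx0 : 0 < x := hX0.trans_le hx
    rw [mul_rpow zero_le_two hx0.le, ← div_div]
    gcongr
    exact (div_le_iff₀' (by positivity)).2 (hX x hx).1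
  refine ⟨M, fun x hx => (div_le_iff₀ (rpow_pos_of_pos (ha.trans_le hx) γ)).1 ?_⟩
  exact forall_le_of_mul_le one_lt_two hX0 haX (fun x hx => hM (mem_image_of_mem _ hx)) hψ x hx

theorem intervalIntegrable_rpow_mul_comp_one_div (hL : IsSlowlyVarying L)
    (hc : ContinuousOn L (Ici 1)) (hγ : 0 < γ) :
    IntervalIntegrable (fun x => x ^ (γ - 1) * L (1 / x)) volume 0 1 := by
  obtain ⟨M, hM⟩ := hL.exists_abs_le_mul_rpow one_pos hc (half_pos hγ)
  have hdom : IntervalIntegrable (fun x : ℝ => M * x ^ (γ / 2 - 1)) volume 0 1 :=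
    (intervalIntegral.intervalIntegrable_rpow' (by linarith)).const_mul M
  have hcont : ContinuousOn (fun x => x ^ (γ - 1) * L (1 / x)) (Ioo 0 1) :=
    (continuousOn_id.rpow_const fun x hx => .inl hx.1.ne').mul <|
      hc.comp (continuousOn_const.div continuousOn_id fun x hx => hx.1.ne')
        fun x hx => (one_le_div hx.1).2 hx.2.le
  rw [intervalIntegrable_iff_integrableOn_Ioo_of_le zero_le_one] at hdom ⊢
  refine hdom.mono' (hcont.aestronglyMeasurable measurableSet_Ioo) ?_
  refine ae_restrict_of_forall_mem measurableSet_Ioo fun x ⟨hx0, hx1⟩ => ?_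
  calc ‖x ^ (γ - 1) * L (1 / x)‖ = x ^ (γ - 1) * |L (1 / x)| := by
        rw [norm_mul, norm_of_nonneg (rpow_nonneg hx0.le _), norm_eq_abs]
    _ ≤ x ^ (γ - 1) * (M * (1 / x) ^ (γ / 2)) := by
        gcongr
        exact hM _ ((one_le_div hx0).2 hx1.le)
    _ = M * (x ^ (γ - 1) * x ^ (-(γ / 2))) := by
        rw [one_div, inv_rpow hx0.le, ← rpow_neg hx0.le, mul_left_comm]
    _ = M * x ^ (γ / 2 - 1) := by
        rw [← rpow_add hx0]
        ring_nf

theorem intervalIntegrable_one_sub_rpow_mul (hL : IsSlowlyVarying L)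
    (hc : ContinuousOn L (Ici 1)) (hγ : 0 < γ) :
    IntervalIntegrable (fun x => (1 - x) ^ (γ - 1) * L (1 / (1 - x))) volume 0 1 := by
  simpa using ((hL.intervalIntegrable_rpow_mul_comp_one_div hc hγ).comp_sub_left 1).symm

end IsSlowlyVarying

theorem continuousOn_one_sub_rpow_mul {L : ℝ → ℝ} (hL : ContinuousOn L (Ici 1)) (ρ : ℝ) :
    ContinuousOn (fun x => (1 - x) ^ ρ * L (1 / (1 - x))) (Ico 0 1) := by
  have hpos : ∀ x ∈ Ico (0 : ℝ) 1, 0 < 1 - x := fun x hx => sub_pos.2 hx.2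
  have hsub : ContinuousOn (fun x : ℝ => 1 - x) (Ico 0 1) := by fun_prop
  refine (hsub.rpow_const fun x hx => .inl (hpos x hx).ne').mul ?_
  refine hL.comp (continuousOn_const.div hsub fun x hx => (hpos x hx).ne') fun x hx => ?_
  exact (one_le_div (hpos x hx)).2 (sub_le_self 1 hx.1)

section AutonomousODE

variable {f k y : ℝ → ℝ} {a b c : ℝ}

theorem integral_comp_mul_eq_integral_of_ode (hf : ContinuousOn f (y '' uIcc a b))
    (hk : ContinuousOn k (y '' uIcc a b))
    (hode : ∀ t ∈ uIcc a b, HasDerivWithinAt y (f (y t)) (uIcc a b) t) :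
    ∫ u in a..b, k (y u) * f (y u) = ∫ x in y a..y b, k x := by
  have hy : ContinuousOn y (uIcc a b) := fun t ht => (hode t ht).continuousWithinAt
  refine intervalIntegral.integral_comp_mul_deriv'' hy (fun t ht => ?_)
    (hf.comp hy (mapsTo_image y _)) hk
  exact ((hode t (Ioo_subset_Icc_self ht)).hasDerivAt (Icc_mem_nhds ht.1 ht.2)).hasDerivWithinAt

-- For `k = -g / f` the integrand `-(k (y u) * f (y u))` is `g (y u)`.
theorem exp_neg_integral_eq_div_of_ode (hf : ContinuousOn f (y '' uIcc a b))
    (hk : ContinuousOn k (y '' uIcc a b))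
    (hode : ∀ t ∈ uIcc a b, HasDerivWithinAt y (f (y t)) (uIcc a b) t)
    (hint : IntervalIntegrable k volume (y a) c) :
    exp (-∫ x in y b..c, k x) =
      exp (-∫ x in y a..c, k x) / exp (∫ u in a..b, -(k (y u) * f (y u))) := by
  have hy : ContinuousOn y (uIcc a b) := fun t ht => (hode t ht).continuousWithinAt
  have hab : IntervalIntegrable k volume (y a) (y b) :=
    (hk.mono (intermediate_value_uIcc hy)).intervalIntegrable
  rw [← exp_sub, intervalIntegral.integral_neg, integral_comp_mul_eq_integral_of_ode hf hk hode,
    ← intervalIntegral.integral_add_adjacent_intervals hab (hab.symm.trans hint)]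
  ring_nf

end AutonomousODE

theorem stmt12_general {ν δ γ : ℝ} (hγ : γ = δ - ν) (hγpos : 0 < γ) {𝓛 ℓ : ℝ → ℝ}
    (h𝓛 : ∀ x ∈ Ici (1 : ℝ), 𝓛 x ≠ 0)
    (h𝓛cont : ContinuousOn 𝓛 (Ici 1)) (hℓcont : ContinuousOn ℓ (Ici 1))
    (hsv : IsSlowlyVarying (fun x => ℓ x / 𝓛 x))
    {y : ℝ → ℝ} {a b : ℝ} (hy : MapsTo y (uIcc a b) (Ico 0 1))
    (hode : ∀ t ∈ uIcc a b,
      HasDerivWithinAt y ((1 - y t) ^ (1 + ν) * 𝓛 (1 / (1 - y t))) (uIcc a b) t) :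
    exp (-∫ x in y b..1, (1 - x) ^ (γ - 1) * (ℓ (1 / (1 - x)) / 𝓛 (1 / (1 - x)))) =
      exp (-∫ x in y a..1, (1 - x) ^ (γ - 1) * (ℓ (1 / (1 - x)) / 𝓛 (1 / (1 - x)))) /
        exp (∫ u in a..b, -(1 - y u) ^ δ * ℓ (1 / (1 - y u))) := by
  have hLcont : ContinuousOn (fun x => ℓ x / 𝓛 x) (Ici 1) := hℓcont.div h𝓛cont h𝓛
  have hint : IntervalIntegrable
      (fun x => (1 - x) ^ (γ - 1) * (ℓ (1 / (1 - x)) / 𝓛 (1 / (1 - x)))) volume (y a) 1 :=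
    (hsv.intervalIntegrable_one_sub_rpow_mul hLcont hγpos).mono_set <|
      uIcc_subset_uIcc_right <| Icc_subset_uIcc <| Ico_subset_Icc_self <| hy left_mem_uIcc
  rw [exp_neg_integral_eq_div_of_ode
    ((continuousOn_one_sub_rpow_mul h𝓛cont (1 + ν)).mono hy.image_subset)
    ((continuousOn_one_sub_rpow_mul hLcont (γ - 1)).mono hy.image_subset) hode hint]
  congr 2
  refine intervalIntegral.integral_congr fun u hu => ?_
  have hpos : 0 < 1 - y u := sub_pos.2 (hy hu).2
  have h𝓛u := h𝓛 _ ((one_le_div hpos).2 (sub_le_self 1 (hy hu).1))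
  have hexp : (1 - y u) ^ δ = (1 - y u) ^ (γ - 1) * (1 - y u) ^ (1 + ν) := by
    rw [← rpow_add hpos, hγ]
    ring_nf
  simp only [hexp]
  rw [neg_mul, mul_mul_mul_comm, div_mul_cancel₀ _ h𝓛u]

theorem stmt12
    (ν δ γ : ℝ) (hν0 : 0 < ν) (hν1 : ν < 1) (hδ0 : 0 < δ) (hδ1 : δ < 1)
    (hγ : γ = δ - ν)
    (hγpos : 0 < γ)
    (𝓛 ℓ : ℝ → ℝ)
    (h𝓛pos : ∀ x ∈ Ici (1:ℝ), 0 < 𝓛 x) (hℓpos : ∀ x ∈ Ici (1:ℝ), 0 < ℓ x)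
    (h𝓛cont : ContinuousOn 𝓛 (Ici 1)) (hℓcont : ContinuousOn ℓ (Ici 1))
    (h𝓛sv : ∀ lam > (0:ℝ), Tendsto (fun x => 𝓛 (lam * x) / 𝓛 x) atTop (nhds 1))
    (hℓsv : ∀ lam > (0:ℝ), Tendsto (fun x => ℓ (lam * x) / ℓ x) atTop (nhds 1))
    (F : ℝ → ℝ → ℝ)
    (hFmem : ∀ s ∈ Ico (0:ℝ) 1, ∀ t : ℝ, 0 ≤ t → s ≤ F t s ∧ F t s < 1)
    (hF0 : ∀ s ∈ Ico (0:ℝ) 1, F 0 s = s)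
    (hFode : ∀ s ∈ Ico (0:ℝ) 1, ∀ t : ℝ, 0 ≤ t →
      HasDerivAt (fun u => F u s)
        ((1 - F t s) ^ (1 + ν) * 𝓛 (1 / (1 - F t s))) t)
 :
    ∀ τ : ℝ, 0 ≤ τ → ∀ s ∈ Ico (0:ℝ) 1,
      Real.exp (-∫ x in (F τ s)..(1:ℝ), (1 - x) ^ (γ - 1) * (ℓ (1 / (1 - x)) / 𝓛 (1 / (1 - x)))) =
        Real.exp (-∫ x in s..(1:ℝ), (1 - x) ^ (γ - 1) * (ℓ (1 / (1 - x)) / 𝓛 (1 / (1 - x)))) / Real.exp (∫ u in (0:ℝ)..τ, -(1 - F u s) ^ δ * ℓ (1 / (1 - F u s))) := by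
  intro τ hτ s hs
  have hnonneg {t : ℝ} (ht : t ∈ uIcc 0 τ) : 0 ≤ t := (le_min le_rfl hτ).trans ht.1
  simpa only [hF0 s hs] using stmt12_general hγ hγpos (fun x hx => (h𝓛pos x hx).ne')
    h𝓛cont hℓcont (IsSlowlyVarying.div hℓsv h𝓛sv) (y := fun t => F t s)
    (fun t ht => ⟨hs.1.trans (hFmem s hs t (hnonneg ht)).1, (hFmem s hs t (hnonneg ht)).2⟩)
    (fun t ht => (hFode s hs t (hnonneg ht)).hasDerivWithinAt)
end

section
/- Assume γ<0, 1<ν/δ<2, and that L(x)=ℓ(x)/𝓛(x) satisfies L(x)=|γ|·(1+O(ℓ(x)/x^δ)) as x→∞. Define π(s)=exp( (1−s)^{−|γ|} + ∫_s^1 [ g(u)/f(u) + |γ|·(1−u)^{−(1+|γ|)} ] du ) for s∈[0,1). Then π(s) ~ exp( (1−s)^{−|γ|} ) as s↑1, i.e. π(s)·exp(−(1−s)^{−|γ|}) → 1 as s↑1. -/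
open Real Filter Asymptotics Set MeasureTheory

/-!
Write `L = ℓ / 𝓛` and substitute `t = 1 - u`. The integrand becomes
`-t ^ (-(1 + |γ|)) * (L (1 / t) - |γ|)`. A slowly varying function is `O(x ^ ε)` for every `ε > 0`,
so the hypothesis on `L` gives `L x - |γ| = O(x ^ (-r))` for every `r < δ`. As `ν / δ < 2` means
`|γ| < δ`, one can take `r > |γ|`; the integrand is then `O(t ^ (r - |γ| - 1))`, hence integrable at
`t = 0`, and the integral from `s` to `1` is the vanishing tail of a convergent integral.
-/

open scoped Topology

/-- Slow variation at infinity in the sense of Karamata. No positivity is built in: the limit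
already forces `L x ≠ 0` for large `x`, since `y / 0 = 0`. -/
def SlowlyVarying (L : ℝ → ℝ) : Prop :=
  ∀ c > 0, Tendsto (fun x => L (c * x) / L x) atTop (𝓝 1)

section Dilation

variable {K β : Type*} [Field K] [LinearOrder K] [IsStrictOrderedRing K] [Preorder β]
  {h : K → β} {c a : K}

theorem apply_pow_mul_le_of_mul_le (hc : 1 ≤ c) (ha : 0 ≤ a) (hstep : ∀ x ≥ a, h (c * x) ≤ h x)
    (n : ℕ) {x : K} (hx : a ≤ x) : h (c ^ n * x) ≤ h x := by
  induction n with
  | zero => simp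
  | succ n ih =>
    have hpow : a ≤ c ^ n * x :=
      hx.trans (le_mul_of_one_le_left (ha.trans hx) (one_le_pow₀ hc))
    rw [pow_succ', mul_assoc]
    exact (hstep _ hpow).trans ih

theorem bddAbove_image_Ici_of_mul_le [Archimedean K] (hc : 1 < c) (ha : 0 < a)
    (hstep : ∀ x ≥ a, h (c * x) ≤ h x) (hbdd : BddAbove (h '' Icc a (c * a))) :
    BddAbove (h '' Ici a) := by
  obtain ⟨M, hM⟩ := hbdd
  refine ⟨M, forall_mem_image.2 fun x hx => ?_⟩
  obtain ⟨n, hn_le, hn_lt⟩ := exists_nat_pow_near ((one_le_div ha).2 hx) hc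
  have hcn : 0 < c ^ n := pow_pos (zero_lt_one.trans hc) n
  have hlower : a ≤ x / c ^ n := by
    rw [le_div_iff₀ hcn, mul_comm]
    exact (le_div_iff₀ ha).1 hn_le
  have hupper : x / c ^ n ≤ c * a := by
    rw [div_le_iff₀ hcn, mul_right_comm, ← pow_succ']
    exact ((div_lt_iff₀ ha).1 hn_lt).le
  calc h x = h (c ^ n * (x / c ^ n)) := by rw [mul_div_cancel₀ x hcn.ne']
    _ ≤ h (x / c ^ n) := apply_pow_mul_le_of_mul_le hc.le ha.le hstep n hlower
    _ ≤ M := hM (mem_image_of_mem h ⟨hlower, hupper⟩)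

end Dilation

theorem isBigO_rpow_of_norm_mul_le {E : Type*} [SeminormedAddCommGroup E] {f : ℝ → E} {c a ε : ℝ}
    (hc : 1 < c) (ha : 0 < a) (hf : ContinuousOn f (Icc a (c * a)))
    (hstep : ∀ x ≥ a, ‖f (c * x)‖ ≤ c ^ ε * ‖f x‖) :
    f =O[atTop] fun x => x ^ ε := by
  have hc0 : 0 < c := zero_lt_one.trans hc
  have hquot_step : ∀ x ≥ a, ‖f (c * x)‖ / (c * x) ^ ε ≤ ‖f x‖ / x ^ ε := fun x hx => by
    have hx0 : 0 < x := ha.trans_le hx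
    rw [mul_rpow hc0.le hx0.le, ← mul_div_mul_left ‖f x‖ (x ^ ε) (rpow_pos_of_pos hc0 ε).ne']
    gcongr
    exact hstep x hx
  have hquot_cont : ContinuousOn (fun x => ‖f x‖ / x ^ ε) (Icc a (c * a)) :=
    hf.norm.div (continuousOn_id.rpow_const fun x hx => Or.inl (ha.trans_le hx.1).ne')
      fun x hx => (rpow_pos_of_pos (ha.trans_le hx.1) ε).ne'
  obtain ⟨M, hM⟩ :=
    bddAbove_image_Ici_of_mul_le hc ha hquot_step (isCompact_Icc.bddAbove_image hquot_cont)
  refine IsBigO.of_bound M ?_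
  filter_upwards [eventually_ge_atTop a] with x hx
  have hxε : 0 < x ^ ε := rpow_pos_of_pos (ha.trans_le hx) ε
  rw [norm_of_nonneg hxε.le, ← div_le_iff₀ hxε]
  exact hM (mem_image_of_mem _ hx)

namespace SlowlyVarying

variable {L : ℝ → ℝ} {a : ℝ}

theorem isBigO_rpow (hL : SlowlyVarying L) (hcont : ContinuousOn L (Ici a)) {ε : ℝ} (hε : 0 < ε) :
    L =O[atTop] fun x => x ^ ε := by
  have hlim := hL 2 two_pos
  have hlt : ∀ᶠ x in atTop, ‖L (2 * x) / L x‖ < 2 ^ ε :=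
    hlim.norm.eventually_lt_const (by rw [norm_one]; exact one_lt_rpow one_lt_two hε)
  have hstep : ∀ᶠ x in atTop, ‖L (2 * x)‖ ≤ 2 ^ ε * ‖L x‖ := by
    filter_upwards [hlt, hlim.eventually_ne one_ne_zero] with x hx hne
    have hLx : L x ≠ 0 := (div_ne_zero_iff.1 hne).2
    rw [norm_div, div_lt_iff₀ (norm_pos_iff.2 hLx)] at hx
    exact hx.le
  obtain ⟨b, hb⟩ := eventually_atTop.1 hstep
  have ha : a ≤ max 1 (max a b) := (le_max_left a b).trans (le_max_right _ _)
  have hb' : b ≤ max 1 (max a b) := (le_max_right a b).trans (le_max_right _ _)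
  exact isBigO_rpow_of_norm_mul_le one_lt_two (zero_lt_one.trans_le (le_max_left _ _))
    (hcont.mono (Icc_subset_Ici_self.trans (Ici_subset_Ici.2 ha)))
    fun x hx => hb x (hb'.trans hx)

theorem div_rpow_isBigO (hL : SlowlyVarying L) (hcont : ContinuousOn L (Ici a)) {r δ : ℝ}
    (hrδ : r < δ) : (fun x => L x / x ^ δ) =O[atTop] fun x => x ^ (-r) := by
  refine ((hL.isBigO_rpow hcont (sub_pos.2 hrδ)).mul (isBigO_refl (fun x => (x ^ δ)⁻¹) _)).congr'
    (.of_forall fun x => (div_eq_mul_inv _ _).symm) ?_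
  filter_upwards [eventually_gt_atTop 0] with x hx
  rw [← rpow_neg hx.le, ← rpow_add hx]
  congr 1
  ring

end SlowlyVarying

section Integrability

variable {E : Type*} [NormedAddCommGroup E] {f : ℝ → E} {μ : Measure ℝ} {a b : ℝ}

theorem intervalIntegrable_of_isBigO_nhdsGT {F : Type*} [NormedAddCommGroup F] {g : ℝ → F}
    (hab : a < b) (hf : LocallyIntegrableOn f (Ioc a b) μ)
    (hfg : f =O[𝓝[>] a] g) (hg : IntegrableAtFilter g (𝓝[>] a) μ) :
    IntervalIntegrable f μ a b := by
  have hmeas : StronglyMeasurableAtFilter f (𝓝[>] a) μ :=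
    ⟨Ioc a b, Ioc_mem_nhdsGT hab, hf.aestronglyMeasurable⟩
  obtain ⟨u, hu, hfu⟩ := hfg.integrableAtFilter hmeas hg
  obtain ⟨c, ⟨hac, hcb⟩, hcu⟩ := (mem_nhdsGT_iff_exists_mem_Ioc_Ioo_subset hab).1 hu
  rw [intervalIntegrable_iff_integrableOn_Ioc_of_le hab.le, ← Ioo_union_Icc_eq_Ioc hac hcb]
  exact (hfu.mono_set hcu).union
    (hf.integrableOn_compact_subset (Icc_subset_Ioc hac le_rfl) isCompact_Icc)

theorem tendsto_intervalIntegral_nhdsLT_zero [NormedSpace ℝ E] [NullSingletonClass μ]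
    (hab : a < b) (hf : IntervalIntegrable f μ a b) :
    Tendsto (fun s => ∫ u in s..b, f u ∂μ) (𝓝[<] b) (𝓝 0) := by
  have hcont : ContinuousOn (fun s => ∫ u in s..b, f u ∂μ) (uIcc a b) :=
    intervalIntegral.continuousOn_primitive_interval_left ((intervalIntegrable_iff').1 hf)
  have hlim := (hcont b right_mem_uIcc).tendsto
  rw [intervalIntegral.integral_same, uIcc_of_le hab.le] at hlim
  exact hlim.mono_left (nhdsWithin_le_of_mem (Icc_mem_nhdsLT hab))

end Integrability

theorem intervalIntegrable_rpow_mul_comp_one_div {h : ℝ → ℝ} {κ r : ℝ}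
    (hcont : ContinuousOn h (Ici 1)) (hh : h =O[atTop] fun x => x ^ (-r)) (hκr : κ < r) :
    IntervalIntegrable (fun t => t ^ (-(1 + κ)) * h (1 / t)) volume 0 1 := by
  have hbound : (fun t => t ^ (-(1 + κ)) * h (1 / t)) =O[𝓝[>] 0] fun t => t ^ (r - κ - 1) := by
    have hlim : Tendsto (fun t : ℝ => 1 / t) (𝓝[>] 0) atTop := by
      simpa only [one_div] using tendsto_inv_nhdsGT_zero (𝕜 := ℝ)
    refine ((isBigO_refl (fun t : ℝ => t ^ (-(1 + κ))) _).mul (hh.comp_tendsto hlim)).congr'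
      .rfl ?_
    filter_upwards [self_mem_nhdsWithin] with t ht
    rw [Function.comp_apply, one_div, inv_rpow (le_of_lt ht), ← rpow_neg (le_of_lt ht),
      ← rpow_add ht]
    congr 1
    ring
  have hpow : IntegrableAtFilter (fun t : ℝ => t ^ (r - κ - 1)) (𝓝[>] 0) :=
    ⟨Ioc 0 1, Ioc_mem_nhdsGT one_pos,
      (intervalIntegral.intervalIntegrable_rpow' (by linarith)).1⟩
  have hcont' : ContinuousOn (fun t => t ^ (-(1 + κ)) * h (1 / t)) (Ioc 0 1) :=
    (continuousOn_id.rpow_const fun t ht => Or.inl ht.1.ne').mul <|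
      hcont.comp (continuousOn_const.div continuousOn_id fun t ht => ht.1.ne')
        fun t ht => one_le_one_div ht.1 ht.2
  exact intervalIntegrable_of_isBigO_nhdsGT one_pos (hcont'.locallyIntegrableOn measurableSet_Ioc)
    hbound hpow

theorem neg_rpow_mul_div_add_eq {ν δ κ t : ℝ} (hκ : κ = ν - δ) (ht : 0 < t) (x y : ℝ) :
    -t ^ δ * x / (t ^ (1 + ν) * y) + κ * t ^ (-(1 + κ)) = -(t ^ (-(1 + κ)) * (x / y - κ)) := by
  have hpow : t ^ δ = t ^ (-(1 + κ)) * t ^ (1 + ν) := by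
    rw [← rpow_add ht, hκ]
    congr 1
    ring
  rw [hpow]
  field_simp
  ring

theorem stmt16_general {ν δ κ r : ℝ} {𝓛 ℓ : ℝ → ℝ} (hκ : κ = ν - δ) (hκr : κ < r)
    (h𝓛ne : ∀ x ∈ Ici (1 : ℝ), 𝓛 x ≠ 0) (h𝓛cont : ContinuousOn 𝓛 (Ici 1))
    (hℓcont : ContinuousOn ℓ (Ici 1))
    (hL : (fun x => ℓ x / 𝓛 x - κ) =O[atTop] fun x => x ^ (-r)) :
    Tendsto (fun s => exp ((1 - s) ^ (-κ) + ∫ u in s..(1 : ℝ),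
        (-(1 - u) ^ δ * ℓ (1 / (1 - u))) / ((1 - u) ^ (1 + ν) * 𝓛 (1 / (1 - u)))
          + κ * (1 - u) ^ (-(1 + κ))) * exp (-(1 - s) ^ (-κ)))
      (𝓝[<] 1) (𝓝 1) := by
  have hint : IntervalIntegrable (fun t => -t ^ δ * ℓ (1 / t) / (t ^ (1 + ν) * 𝓛 (1 / t))
      + κ * t ^ (-(1 + κ))) volume 0 1 :=
    (intervalIntegrable_rpow_mul_comp_one_div
      ((hℓcont.div h𝓛cont h𝓛ne).sub continuousOn_const) hL hκr).neg.congr fun t ht =>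
        (neg_rpow_mul_div_add_eq hκ (uIoc_of_le (zero_le_one' ℝ) ▸ ht).1 _ _).symm
  have hint' := (hint.comp_sub_left 1).symm
  rw [sub_self, sub_zero] at hint'
  have hexp := (continuous_exp.tendsto 0).comp (tendsto_intervalIntegral_nhdsLT_zero one_pos hint')
  rw [exp_zero] at hexp
  refine hexp.congr fun s => ?_
  rw [Function.comp_apply, ← exp_add, add_neg_cancel_comm]

theorem stmt16
    (ν δ γ : ℝ) (hν0 : 0 < ν) (hν1 : ν < 1) (hδ0 : 0 < δ) (hδ1 : δ < 1)
    (hγ : γ = δ - ν)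
    (hγneg : γ < 0)
    (𝓛 ℓ : ℝ → ℝ)
    (h𝓛pos : ∀ x ∈ Ici (1:ℝ), 0 < 𝓛 x) (hℓpos : ∀ x ∈ Ici (1:ℝ), 0 < ℓ x)
    (h𝓛cont : ContinuousOn 𝓛 (Ici 1)) (hℓcont : ContinuousOn ℓ (Ici 1))
    (h𝓛sv : ∀ lam > (0:ℝ), Tendsto (fun x => 𝓛 (lam * x) / 𝓛 x) atTop (nhds 1))
    (hℓsv : ∀ lam > (0:ℝ), Tendsto (fun x => ℓ (lam * x) / ℓ x) atTop (nhds 1))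
    (hr1 : 1 < ν / δ) (hr2 : ν / δ < 2)
    (hLgam : (fun x => ℓ x / 𝓛 x - |γ|) =O[atTop] fun x => ℓ x / x ^ δ)
 :
    Tendsto (fun s => Real.exp ((1 - s) ^ (-|γ|) + ∫ u in s..(1:ℝ), (-(1 - u) ^ δ * ℓ (1 / (1 - u))) / ((1 - u) ^ (1 + ν) * 𝓛 (1 / (1 - u))) + |γ| * (1 - u) ^ (-(1 + |γ|))) * Real.exp (-(1 - s) ^ (-|γ|)))
      (nhdsWithin 1 (Iio 1)) (nhds 1) := by
  have hγν : |γ| = ν - δ := by rw [abs_of_neg hγneg, hγ, neg_sub]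
  have hγδ : |γ| < δ := by linarith [(div_lt_iff₀ hδ0).1 hr2]
  obtain ⟨r, hγr, hrδ⟩ := exists_between hγδ
  exact stmt16_general hγν hγr (fun x hx => (h𝓛pos x hx).ne') h𝓛cont hℓcont
    (hLgam.trans (SlowlyVarying.div_rpow_isBigO hℓsv hℓcont hrδ))
end

section
/- Assume γ<0 and that ∫_0^1 | g(u)/f(u) + |γ|·(1−u)^{−(1+|γ|)} | du < ∞. Define π(s)=exp( (1−s)^{−|γ|} + ∫_s^1 [ g(u)/f(u) + |γ|·(1−u)^{−(1+|γ|)} ] du ) for s∈[0,1). Then π satisfies the Schröder-type functional equation π(F(τ;s)) = π(s)/P(τ;s) for every τ≥0 and s∈[0,1). -/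
open Real Filter Asymptotics Set MeasureTheory

/-!
Write `q = g / f`. Along a trajectory of `F' = f(F)` the substitution `x = F(t; s)` turns
`∫ q(x) dx` into `∫ g(F(t; s)) dt`, so `P(τ; s)` is the exponential of the increment of a primitive
of `q` between `s` and `F(τ; s)`. This primitive cannot be normalised at the endpoint `1`, where `q`
need not be integrable; adding and subtracting the derivative of `A(u) = (1 - u)^(-|γ|)` gives one
that can, and `π` is the exponential of its negative.
-/

/-- The primitive `A x + ∫ₓᵇ (q + A')` of `-q`, a substitute for `∫ₓᵇ q` when `q` is not integrable
at `b` but the singularity is compensated by the derivative `A'` of `A`. The derivative is a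
separate argument, so that an explicit formula can be supplied for it. -/
noncomputable def regularizedTail (q A A' : ℝ → ℝ) (b x : ℝ) : ℝ :=
  A x + ∫ u in x..b, q u + A' u

theorem regularizedTail_eq_sub_integral {q A A' : ℝ → ℝ} {b x y : ℝ}
    (hq : IntervalIntegrable q volume x y)
    (hA : ∀ u ∈ uIcc x y, HasDerivAt A (A' u) u)
    (hx : IntervalIntegrable (fun u ↦ q u + A' u) volume x b)
    (hy : IntervalIntegrable (fun u ↦ q u + A' u) volume y b) :
    regularizedTail q A A' b y = regularizedTail q A A' b x - ∫ u in x..y, q u := by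
  have hA' : IntervalIntegrable A' volume x y := by
    simpa only [add_sub_cancel_left] using (hx.trans hy.symm).sub hq
  have ftc : ∫ u in x..y, A' u = A y - A x :=
    intervalIntegral.integral_eq_sub_of_hasDerivAt hA hA'
  have split : ∫ u in x..y, q u + A' u = (∫ u in x..y, q u) + ∫ u in x..y, A' u :=
    intervalIntegral.integral_add hq hA'
  have concat : (∫ u in x..y, q u + A' u) + ∫ u in y..b, q u + A' u = ∫ u in x..b, q u + A' u :=
    intervalIntegral.integral_add_adjacent_intervals (hx.trans hy.symm) hy
  unfold regularizedTail
  linarith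

theorem integral_div_eq_integral_comp {f g φ : ℝ → ℝ} {S : Set ℝ} {t₀ t₁ : ℝ}
    (hf : ContinuousOn f S) (hf_ne : ∀ x ∈ S, f x ≠ 0) (hg : ContinuousOn g S)
    (hφS : MapsTo φ (uIcc t₀ t₁) S)
    (hφ : ∀ t ∈ uIcc t₀ t₁, HasDerivWithinAt φ (f (φ t)) (uIcc t₀ t₁) t) :
    ∫ x in φ t₀..φ t₁, g x / f x = ∫ t in t₀..t₁, g (φ t) := by
  have hφ_cont : ContinuousOn φ (uIcc t₀ t₁) := fun t ht ↦ (hφ t ht).continuousWithinAt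
  have hφ_right : ∀ t ∈ Ioo (min t₀ t₁) (max t₀ t₁), HasDerivWithinAt φ (f (φ t)) (Ioi t) t :=
    fun t ht ↦ ((hφ t (Ioo_subset_Icc_self ht)).hasDerivAt
      (Icc_mem_nhds ht.1 ht.2)).hasDerivWithinAt
  calc ∫ x in φ t₀..φ t₁, g x / f x
      = ∫ t in t₀..t₁, g (φ t) / f (φ t) * f (φ t) :=
        (intervalIntegral.integral_comp_mul_deriv'' hφ_cont hφ_right (hf.comp hφ_cont hφS)
          ((hg.div hf hf_ne).mono hφS.image_subset)).symm
    _ = ∫ t in t₀..t₁, g (φ t) :=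
        intervalIntegral.integral_congr fun t ht ↦ div_mul_cancel₀ _ (hf_ne _ (hφS ht))

theorem hasDerivAt_one_sub_rpow_neg (c : ℝ) {u : ℝ} (hu : u ≠ 1) :
    HasDerivAt (fun u : ℝ ↦ (1 - u) ^ (-c)) (c * (1 - u) ^ (-(1 + c))) u := by
  have h := ((hasDerivAt_id' u).const_sub 1).rpow_const (p := -c) (Or.inl (sub_ne_zero.2 hu.symm))
  rwa [neg_one_mul, neg_neg, ← neg_add', add_comm c] at h

theorem continuousOn_one_sub_rpow (p : ℝ) :
    ContinuousOn (fun u : ℝ ↦ (1 - u) ^ p) {1}ᶜ :=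
  (continuousOn_const.sub continuousOn_id).rpow_const fun _ hu ↦
    Or.inl (sub_ne_zero.2 (Ne.symm hu))

theorem mapsTo_one_div_one_sub : MapsTo (fun u : ℝ ↦ 1 / (1 - u)) (Ico 0 1) (Ici 1) :=
  fun _ hu ↦ (one_le_div (sub_pos.2 hu.2)).2 (sub_le_self 1 hu.1)

theorem continuousOn_comp_one_div_one_sub {L : ℝ → ℝ} (hL : ContinuousOn L (Ici 1)) :
    ContinuousOn (fun u : ℝ ↦ L (1 / (1 - u))) (Ico 0 1) :=
  hL.comp (continuousOn_const.div (continuousOn_const.sub continuousOn_id)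
    fun _ hu ↦ (sub_pos.2 hu.2).ne') mapsTo_one_div_one_sub

theorem continuousOn_one_sub_rpow_mul_comp (p : ℝ) {L : ℝ → ℝ} (hL : ContinuousOn L (Ici 1)) :
    ContinuousOn (fun u : ℝ ↦ (1 - u) ^ p * L (1 / (1 - u))) (Ico 0 1) :=
  ((continuousOn_one_sub_rpow p).mono fun _ hu ↦ hu.2.ne).mul
    (continuousOn_comp_one_div_one_sub hL)

theorem one_sub_rpow_mul_comp_pos (p : ℝ) {L : ℝ → ℝ} (hL : ∀ x ∈ Ici (1 : ℝ), 0 < L x)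
    {u : ℝ} (hu : u ∈ Ico (0 : ℝ) 1) : 0 < (1 - u) ^ p * L (1 / (1 - u)) :=
  mul_pos (rpow_pos_of_pos (sub_pos.2 hu.2) p) (hL _ (mapsTo_one_div_one_sub hu))

theorem stmt18_general {a b : ℝ} {f g A A' : ℝ → ℝ} {F : ℝ → ℝ → ℝ}
    (hf : ContinuousOn f (Ico a b)) (hf_ne : ∀ u ∈ Ico a b, f u ≠ 0)
    (hg : ContinuousOn g (Ico a b))
    (hA : ∀ u ∈ Ico a b, HasDerivAt A (A' u) u)
    (hint : IntervalIntegrable (fun u ↦ g u / f u + A' u) volume a b)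
    (hF_mem : ∀ s ∈ Ico a b, ∀ t, 0 ≤ t → F t s ∈ Ico a b)
    (hF_zero : ∀ s ∈ Ico a b, F 0 s = s)
    (hF_ode : ∀ s ∈ Ico a b, ∀ t, 0 ≤ t →
      HasDerivWithinAt (fun u ↦ F u s) (f (F t s)) (Ici 0) t) :
    ∀ τ, 0 ≤ τ → ∀ s ∈ Ico a b,
      exp (regularizedTail (fun u ↦ g u / f u) A A' b (F τ s)) =
        exp (regularizedTail (fun u ↦ g u / f u) A A' b s) / exp (∫ u in 0..τ, g (F u s)) := by
  intro τ hτ s hs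
  have time_nonneg : uIcc 0 τ ⊆ Ici 0 := uIcc_of_le hτ ▸ Icc_subset_Ici_self
  have path_subset : uIcc s (F τ s) ⊆ Ico a b := ordConnected_Ico.uIcc_subset hs (hF_mem s hs τ hτ)
  have tail_integrable : ∀ x ∈ Ico a b,
      IntervalIntegrable (fun u ↦ g u / f u + A' u) volume x b := fun x hx ↦
    hint.mono_set (uIcc_subset_uIcc_right (Icc_subset_uIcc (Ico_subset_Icc_self hx)))
  have substitution : ∫ x in s..F τ s, g x / f x = ∫ t in 0..τ, g (F t s) := by
    simpa only [hF_zero s hs] using integral_div_eq_integral_comp (φ := fun t ↦ F t s) hf hf_ne hg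
      (fun t ht ↦ hF_mem s hs t (time_nonneg ht))
      (fun t ht ↦ (hF_ode s hs t (time_nonneg ht)).mono time_nonneg)
  have quotient_integrable : IntervalIntegrable (fun u ↦ g u / f u) volume s (F τ s) :=
    ((hg.div hf hf_ne).mono path_subset).intervalIntegrable
  rw [← exp_sub, ← substitution, regularizedTail_eq_sub_integral quotient_integrable
    (fun u hu ↦ hA u (path_subset hu)) (tail_integrable s hs)
    (tail_integrable _ (hF_mem s hs τ hτ))]

theorem stmt18
    (ν δ γ : ℝ) (hν0 : 0 < ν) (hν1 : ν < 1) (hδ0 : 0 < δ) (hδ1 : δ < 1)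
    (hγ : γ = δ - ν)
    (hγneg : γ < 0)
    (𝓛 ℓ : ℝ → ℝ)
    (h𝓛pos : ∀ x ∈ Ici (1:ℝ), 0 < 𝓛 x) (hℓpos : ∀ x ∈ Ici (1:ℝ), 0 < ℓ x)
    (h𝓛cont : ContinuousOn 𝓛 (Ici 1)) (hℓcont : ContinuousOn ℓ (Ici 1))
    (h𝓛sv : ∀ lam > (0:ℝ), Tendsto (fun x => 𝓛 (lam * x) / 𝓛 x) atTop (nhds 1))
    (hℓsv : ∀ lam > (0:ℝ), Tendsto (fun x => ℓ (lam * x) / ℓ x) atTop (nhds 1))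
    (F : ℝ → ℝ → ℝ)
    (hFmem : ∀ s ∈ Ico (0:ℝ) 1, ∀ t : ℝ, 0 ≤ t → s ≤ F t s ∧ F t s < 1)
    (hF0 : ∀ s ∈ Ico (0:ℝ) 1, F 0 s = s)
    (hFode : ∀ s ∈ Ico (0:ℝ) 1, ∀ t : ℝ, 0 ≤ t →
      HasDerivAt (fun u => F u s)
        ((1 - F t s) ^ (1 + ν) * 𝓛 (1 / (1 - F t s))) t)
    (hint : IntervalIntegrable (fun u => (-(1 - u) ^ δ * ℓ (1 / (1 - u))) / ((1 - u) ^ (1 + ν) * 𝓛 (1 / (1 - u))) + |γ| * (1 - u) ^ (-(1 + |γ|))) volume 0 1) :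
    ∀ τ : ℝ, 0 ≤ τ → ∀ s ∈ Ico (0:ℝ) 1,
      Real.exp ((1 - (F τ s)) ^ (-|γ|) + ∫ u in (F τ s)..(1:ℝ), (-(1 - u) ^ δ * ℓ (1 / (1 - u))) / ((1 - u) ^ (1 + ν) * 𝓛 (1 / (1 - u))) + |γ| * (1 - u) ^ (-(1 + |γ|))) =
        Real.exp ((1 - s) ^ (-|γ|) + ∫ u in s..(1:ℝ), (-(1 - u) ^ δ * ℓ (1 / (1 - u))) / ((1 - u) ^ (1 + ν) * 𝓛 (1 / (1 - u))) + |γ| * (1 - u) ^ (-(1 + |γ|))) / Real.exp (∫ u in (0:ℝ)..τ, -(1 - F u s) ^ δ * ℓ (1 / (1 - F u s))) :=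
  stmt18_general (continuousOn_one_sub_rpow_mul_comp _ h𝓛cont)
    (fun _ hu ↦ (one_sub_rpow_mul_comp_pos _ h𝓛pos hu).ne')
    (by simpa only [neg_mul] using (continuousOn_one_sub_rpow_mul_comp δ hℓcont).fun_neg)
    (fun _ hu ↦ hasDerivAt_one_sub_rpow_neg |γ| hu.2.ne) hint
    (fun s hs t ht ↦ ⟨hs.1.trans (hFmem s hs t ht).1, (hFmem s hs t ht).2⟩) hF0
    (fun s hs t ht ↦ (hFode s hs t ht).hasDerivWithinAt)
end

section
/- For every t≥0, −ln p₀₀(t) = ∫_1^{τ(t)} y^{−(1+γ)}·L(y) dy, where τ(t)=1/(1−F(t;0)). -/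
open Real Filter Asymptotics Set MeasureTheory

/-!
Put `τ = 1 / (1 - F)`. The backward equation for `F` becomes the autonomous equation
`τ' = τ ^ (1 - ν) * 𝓛 τ`, and `-g(F) = τ ^ (-δ) * ℓ τ`. As the right-hand side of the equation is
positive, `y = τ u` can be taken as the variable of integration, with
`du = dy / (y ^ (1 - ν) * 𝓛 y)`.
-/

-- If `h / φ` is not integrable between `x a` and `x b`, both sides are the junk value `0`.
theorem integral_comp_eq_integral_div_of_hasDerivAt {φ x h : ℝ → ℝ} {a b : ℝ}
    (hcont : ContinuousOn x (uIcc a b))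
    (hderiv : ∀ u ∈ uIoo a b, HasDerivAt x (φ (x u)) u) (hpos : ∀ u ∈ uIoo a b, 0 < φ (x u)) :
    ∫ u in a..b, h (x u) = ∫ y in x a..x b, h y / φ y := by
  rw [← intervalIntegral.integral_comp_mul_deriv_of_deriv_nonneg hcont hderiv
    fun u hu ↦ (hpos u hu).le]
  exact intervalIntegral.integral_congr_uIoo fun u hu ↦
    (div_mul_cancel₀ (h (x u)) (hpos u hu).ne').symm

theorem one_div_rpow_neg (z p : ℝ) : (1 / z) ^ (-p) = z ^ p := by
  rw [rpow_neg_eq_inv_rpow, one_div, inv_inv]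

theorem hasDerivAt_one_div_one_sub {x : ℝ → ℝ} {p A t : ℝ} (hx : x t ≠ 1)
    (hderiv : HasDerivAt x ((1 - x t) ^ p * A) t) :
    HasDerivAt (fun u ↦ 1 / (1 - x u)) ((1 / (1 - x t)) ^ (2 - p) * A) t := by
  have hne : 1 - x t ≠ 0 := sub_ne_zero.mpr hx.symm
  have hpow : (1 / (1 - x t)) ^ (2 - p) = (1 - x t) ^ p / (1 - x t) ^ 2 := by
    rw [← neg_sub p 2, one_div_rpow_neg, ← Nat.cast_two, rpow_sub_natCast hne]
  rw [hpow]
  simp only [one_div]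
  exact ((hderiv.const_sub 1).fun_inv hne).congr_deriv (by ring)

theorem rpow_neg_mul_div_rpow_mul {y : ℝ} (hy : 0 < y) (p q A B : ℝ) :
    y ^ (-p) * B / (y ^ q * A) = y ^ (-(p + q)) * (B / A) := by
  rw [mul_div_mul_comm, ← rpow_sub hy, neg_add']

theorem integral_one_sub_rpow_mul_eq_integral_rpow_mul_div {p q a b : ℝ} {𝓛 ℓ x : ℝ → ℝ}
    (hx : ∀ u ∈ uIcc a b, x u < 1) (h𝓛pos : ∀ u ∈ uIcc a b, 0 < 𝓛 (1 / (1 - x u)))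
    (hode : ∀ u ∈ uIcc a b, HasDerivAt x ((1 - x u) ^ p * 𝓛 (1 / (1 - x u))) u) :
    ∫ u in a..b, (1 - x u) ^ q * ℓ (1 / (1 - x u)) =
      ∫ y in (1 / (1 - x a))..(1 / (1 - x b)), y ^ (-(q + (2 - p))) * (ℓ y / 𝓛 y) := by
  set τ : ℝ → ℝ := fun u ↦ 1 / (1 - x u)
  have τ_pos : ∀ u ∈ uIcc a b, 0 < τ u := fun u hu ↦ one_div_pos.mpr (sub_pos.mpr (hx u hu))
  have τ_ode : ∀ u ∈ uIcc a b, HasDerivAt τ (τ u ^ (2 - p) * 𝓛 (τ u)) u := fun u hu ↦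
    hasDerivAt_one_div_one_sub (hx u hu).ne (hode u hu)
  have τ_rate_pos : ∀ u ∈ uIcc a b, 0 < τ u ^ (2 - p) * 𝓛 (τ u) := fun u hu ↦
    mul_pos (rpow_pos_of_pos (τ_pos u hu) _) (h𝓛pos u hu)
  calc ∫ u in a..b, (1 - x u) ^ q * ℓ (τ u)
      = ∫ u in a..b, τ u ^ (-q) * ℓ (τ u) := by simp only [τ, one_div_rpow_neg]
    _ = ∫ y in τ a..τ b, y ^ (-q) * ℓ y / (y ^ (2 - p) * 𝓛 y) :=
        integral_comp_eq_integral_div_of_hasDerivAt (h := fun y ↦ y ^ (-q) * ℓ y)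
          (φ := fun y ↦ y ^ (2 - p) * 𝓛 y)
          (fun u hu ↦ (τ_ode u hu).continuousAt.continuousWithinAt)
          (fun u hu ↦ τ_ode u (uIoo_subset_uIcc_self hu))
          (fun u hu ↦ τ_rate_pos u (uIoo_subset_uIcc_self hu))
    _ = ∫ y in τ a..τ b, y ^ (-(q + (2 - p))) * (ℓ y / 𝓛 y) := by
        refine intervalIntegral.integral_congr fun y hy ↦ ?_
        have y_pos : 0 < y :=
          (lt_min (τ_pos a left_mem_uIcc) (τ_pos b right_mem_uIcc)).trans_le hy.1
        exact rpow_neg_mul_div_rpow_mul y_pos q (2 - p) (𝓛 y) (ℓ y)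

theorem stmt19_general {ν δ γ : ℝ} (hγ : γ = δ - ν) {𝓛 ℓ x : ℝ → ℝ}
    (h𝓛pos : ∀ y ∈ Ici (1 : ℝ), 0 < 𝓛 y) (hx : ∀ t : ℝ, 0 ≤ t → 0 ≤ x t ∧ x t < 1)
    (hode : ∀ t : ℝ, 0 ≤ t → HasDerivAt x ((1 - x t) ^ (1 + ν) * 𝓛 (1 / (1 - x t))) t)
    {t : ℝ} (ht : 0 ≤ t) :
    -Real.log (Real.exp (∫ u in (0 : ℝ)..t, -(1 - x u) ^ δ * ℓ (1 / (1 - x u)))) =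
      ∫ y in (1 / (1 - x 0))..(1 / (1 - x t)), y ^ (-(1 + γ)) * (ℓ y / 𝓛 y) := by
  have nonneg_of_mem {u : ℝ} (hu : u ∈ uIcc 0 t) : 0 ≤ u := (uIcc_of_le ht ▸ hu).1
  have one_le_one_div_one_sub {u : ℝ} (hu : 0 ≤ u) : 1 ≤ 1 / (1 - x u) :=
    one_le_one_div (sub_pos.mpr (hx u hu).2) (sub_le_self 1 (hx u hu).1)
  simp only [Real.log_exp, ← intervalIntegral.integral_neg, neg_mul, neg_neg]
  have exponent_eq : 1 + γ = δ + (2 - (1 + ν)) := by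
    rw [hγ]
    ring
  rw [exponent_eq]
  exact integral_one_sub_rpow_mul_eq_integral_rpow_mul_div
    (fun u hu ↦ (hx u (nonneg_of_mem hu)).2)
    (fun u hu ↦ h𝓛pos _ (one_le_one_div_one_sub (nonneg_of_mem hu)))
    (fun u hu ↦ hode u (nonneg_of_mem hu))

theorem stmt19
    (ν δ γ : ℝ) (hν0 : 0 < ν) (hν1 : ν < 1) (hδ0 : 0 < δ) (hδ1 : δ < 1)
    (hγ : γ = δ - ν)
    (𝓛 ℓ : ℝ → ℝ)
    (h𝓛pos : ∀ x ∈ Ici (1:ℝ), 0 < 𝓛 x) (hℓpos : ∀ x ∈ Ici (1:ℝ), 0 < ℓ x)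
    (h𝓛cont : ContinuousOn 𝓛 (Ici 1)) (hℓcont : ContinuousOn ℓ (Ici 1))
    (h𝓛sv : ∀ lam > (0:ℝ), Tendsto (fun x => 𝓛 (lam * x) / 𝓛 x) atTop (nhds 1))
    (hℓsv : ∀ lam > (0:ℝ), Tendsto (fun x => ℓ (lam * x) / ℓ x) atTop (nhds 1))
    (F : ℝ → ℝ → ℝ)
    (hFmem : ∀ s ∈ Ico (0:ℝ) 1, ∀ t : ℝ, 0 ≤ t → s ≤ F t s ∧ F t s < 1)
    (hF0 : ∀ s ∈ Ico (0:ℝ) 1, F 0 s = s)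
    (hFode : ∀ s ∈ Ico (0:ℝ) 1, ∀ t : ℝ, 0 ≤ t →
      HasDerivAt (fun u => F u s)
        ((1 - F t s) ^ (1 + ν) * 𝓛 (1 / (1 - F t s))) t)
 :
    ∀ t : ℝ, 0 ≤ t →
      -Real.log (Real.exp (∫ u in (0:ℝ)..t, -(1 - F u 0) ^ δ * ℓ (1 / (1 - F u 0)))) =
        ∫ y in (1:ℝ)..(1 / (1 - F t 0)), y ^ (-(1 + γ)) * (ℓ y / 𝓛 y) := by
  have h0 : (0 : ℝ) ∈ Ico (0 : ℝ) 1 := left_mem_Ico.mpr one_pos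
  simpa only [hF0 0 h0, sub_zero, one_div_one] using
    fun t ht ↦ stmt19_general (ℓ := ℓ) (t := t) hγ h𝓛pos (hFmem 0 h0) (hFode 0 h0) ht
end
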